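/- Let μ ≥ 0 and let S : ℤ³ → ℂ be a kernel satisfying: S(k,m,n) = 0 whenever kmn = 0; S(k,m,n) = conj(S(−k,−m,−n)); S(k,m,n) = S(k,n,m); S(k,m,n) = S(m,n,k); S(ηk,ηm,ηn) = η^μ S(k,m,n) for every positive integer η; and the bound |S(k,m,n)| ≤ C·min{|k|^μ, |m|^μ, |n|^μ} for some constant C > 0 and all k,m,n ∈ ℤ. Let s > μ + 3/2, let C_s be a constant such that |k|k|^{2s} + m|m|^{2s} + n|n|^{2s}| ≤ C_s(|k|^s|m|^s|n| + |n|^s|k|^s|m| + |m|^s|n|^s|k|) for all real k,m,n with k+m+n = 0, and set K_s = C·C_s·M_{s−μ−1} where M_σ = (2 Σ_{n=1}^∞ n^{−2σ})^{1/2}. Then for every f ∈ Ḣ^s(𝕋), the initial-value problem u_t + a(u,u)_x = 0, u(·,0) = f — equivalently, in Fourier coefficients, ∂_t û(k,t) + ik Σ_{n∈ℤ} S(−k, k−n, n) û(k−n,t) û(n,t) = 0 — has a unique solution u ∈ C(I; Ḣ^s(𝕋)) ∩ C¹(I; Ḣ^{s−1}(𝕋)) on the time interval I = (−t₊, t₊)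 with t₊ = 1/(K_s ‖f‖_s). -/

import Mathlib

open scoped BigOperators
open Filter

/-- The homogeneous Sobolev norm of order `s` of a Fourier coefficient sequence. -/
noncomputable def hnorm (s : ℝ) (u : ℤ → ℂ) : ℝ :=
  (∑' k : ℤ, |(k : ℝ)| ^ (2 * s) * ‖u k‖ ^ 2) ^ ((1 : ℝ) / 2)

/-- Membership in the homogeneous Sobolev space `Ḣ^s(𝕋)` (zero mean, real-valued,
finite `Ḣ^s` norm), in terms of Fourier coefficients. -/
def InHs (s : ℝ) (u : ℤ → ℂ) : Prop :=
  u 0 = 0 ∧ (∀ k : ℤ, u (-k) = starRingEnd ℂ (u k)) ∧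
    Summable fun k : ℤ => |(k : ℝ)| ^ (2 * s) * ‖u k‖ ^ 2

/-- `M_σ = (2 Σ_{n=1}^∞ n^{−2σ})^{1/2}`. -/
noncomputable def Mconst (σ : ℝ) : ℝ :=
  Real.sqrt (2 * ∑' n : ℕ, ((n : ℝ) + 1) ^ (-(2 * σ)))

/-- The Fourier coefficients of the bilinear form `a(u,v)` determined by the kernel `S`. -/
noncomputable def aHat (S : ℤ → ℤ → ℤ → ℂ) (u v : ℤ → ℂ) (k : ℤ) : ℂ :=
  ∑' n : ℤ, S (-k) (k - n) n * u (k - n) * v n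

/-- Continuity of `t ↦ u(·,t)` on `I` with values in `Ḣ^s`. -/
def HsContOn (s : ℝ) (u : ℝ → ℤ → ℂ) (I : Set ℝ) : Prop :=
  ∀ t₀ ∈ I, Tendsto (fun t => hnorm s fun k => u t k - u t₀ k) (nhdsWithin t₀ I) (nhds 0)

/-- `u` is a solution of `u_t + a(u,u)_x = 0` on the time interval `I`,
belonging to `C(I; Ḣ^s) ∩ C¹(I; Ḣ^{s-1})`. -/
def IsSolution (S : ℤ → ℤ → ℤ → ℂ) (s : ℝ) (I : Set ℝ) (u : ℝ → ℤ → ℂ) : Prop :=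
  (∀ t ∈ I, InHs s (u t)) ∧ HsContOn s u I ∧
    (∀ t ∈ I, ∀ k : ℤ, HasDerivAt (fun τ => u τ k)
      (-(Complex.I * (k : ℂ) * aHat S (u t) (u t) k)) t) ∧
    (∀ t ∈ I, InHs (s - 1) fun k => -(Complex.I * (k : ℂ) * aHat S (u t) (u t) k)) ∧
    HsContOn (s - 1) (fun t k => -(Complex.I * (k : ℂ) * aHat S (u t) (u t) k)) I


/-- Squared Sobolev norm. -/
noncomputable def Gs (s : ℝ) (u : ℤ → ℂ) : ℝ := ∑' k : ℤ, |(k : ℝ)| ^ (2 * s) * ‖u k‖ ^ 2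

/-- Frequency box. -/
noncomputable def Box (N : ℕ) : Finset ℤ := Finset.Icc (-(N : ℤ)) N

/-- Truncated bilinear form. -/
noncomputable def Qf (S : ℤ → ℤ → ℤ → ℂ) (N : ℕ) (u v : ℤ → ℂ) (k : ℤ) : ℂ :=
  ∑ m ∈ Box N, ∑ n ∈ Box N, if m + n = k then S (-k) m n * u m * v n else 0

/-- The kernel hypotheses that are used. -/
structure Ker (S : ℤ → ℤ → ℤ → ℂ) (μ C : ℝ) : Prop where
  real : ∀ k m n : ℤ, S k m n = starRingEnd ℂ (S (-k) (-m) (-n))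
  sym : ∀ k m n : ℤ, S k m n = S k n m
  cyc : ∀ k m n : ℤ, S k m n = S m n k
  pos : 0 < C
  bound : ∀ k m n : ℤ, ‖S k m n‖ ≤
      C * min (|(k : ℝ)| ^ μ) (min (|(m : ℝ)| ^ μ) (|(n : ℝ)| ^ μ))

lemma mem_Box {N : ℕ} {k : ℤ} : k ∈ Box N ↔ |k| ≤ N := by
  simp [Box, abs_le]

lemma neg_mem_Box {N : ℕ} {k : ℤ} : -k ∈ Box N ↔ k ∈ Box N := by
  simp [mem_Box]

lemma sum_Box_neg {M : Type*} [AddCommMonoid M] (N : ℕ) (f : ℤ → M) :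
    ∑ k ∈ Box N, f (-k) = ∑ k ∈ Box N, f k :=
  Finset.sum_equiv (Equiv.neg ℤ) (by intro i; simp [neg_mem_Box]) (by intro i _; simp)

/-- Triple convolution bound. -/
lemma tri_le (N : ℕ) (p r : ℤ → ℝ) (hr : ∀ n, 0 ≤ r n) :
    ∑ k ∈ Box N, ∑ m ∈ Box N, ∑ n ∈ Box N,
      (if k + m + n = 0 then p k * p m * r n else 0) ≤
    (∑ k ∈ Box N, p k ^ 2) * ∑ n ∈ Box N, r n := by
  have h1 : ∀ n : ℤ, ∑ k ∈ Box N, ∑ m ∈ Box N, (if k + m + n = 0 then p k ^ 2 else 0)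
      ≤ ∑ k ∈ Box N, p k ^ 2 := by
    intro n
    refine Finset.sum_le_sum fun k _ => ?_
    have : ∀ m : ℤ, (if k + m + n = 0 then p k ^ 2 else 0) =
        if m = -(k + n) then p k ^ 2 else 0 := by
      intro m
      congr 1
      exact propext ⟨fun h => by omega, fun h => by omega⟩
    simp_rw [this, Finset.sum_ite_eq']
    split_ifs
    · exact le_rfl
    · positivity
  have h2 : ∀ n : ℤ, ∑ k ∈ Box N, ∑ m ∈ Box N, (if k + m + n = 0 then p m ^ 2 else 0)
      ≤ ∑ k ∈ Box N, p k ^ 2 := by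
    intro n
    rw [Finset.sum_comm]
    refine le_trans (le_of_eq ?_) (h1 n)
    refine Finset.sum_congr rfl fun k _ => Finset.sum_congr rfl fun m _ => ?_
    rw [add_comm m k]
  have h3 : ∑ k ∈ Box N, ∑ m ∈ Box N, ∑ n ∈ Box N,
      (if k + m + n = 0 then p k * p m * r n else 0) =
      ∑ n ∈ Box N, ∑ k ∈ Box N, ∑ m ∈ Box N,
      (if k + m + n = 0 then p k * p m * r n else 0) := by
    exact (Finset.sum_congr rfl fun k _ => Finset.sum_comm).trans Finset.sum_comm
  rw [h3, Finset.mul_sum]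
  refine Finset.sum_le_sum fun n _ => ?_
  have h4 : ∑ k ∈ Box N, ∑ m ∈ Box N, (if k + m + n = 0 then p k * p m * r n else 0) ≤
      ∑ k ∈ Box N, ∑ m ∈ Box N, ((if k + m + n = 0 then p k ^ 2 else 0) * (r n / 2) +
        (if k + m + n = 0 then p m ^ 2 else 0) * (r n / 2)) := by
    refine Finset.sum_le_sum fun k _ => Finset.sum_le_sum fun m _ => ?_
    split_ifs
    · nlinarith [hr n, mul_nonneg (hr n) (sq_nonneg (p k - p m))]
    · simp
  refine h4.trans ?_
  simp_rw [Finset.sum_add_distrib, ← Finset.sum_mul]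
  have := hr n
  nlinarith [mul_le_mul_of_nonneg_right (h1 n) this, mul_le_mul_of_nonneg_right (h2 n) this]

/-- Expression of the energy derivative as a triple sum. -/
lemma energy_tri {S : ℤ → ℤ → ℤ → ℂ} (N : ℕ) (c : ℤ → ℝ) (hc : ∀ k, c (-k) = c k)
    (u z w : ℤ → ℂ) (hu : ∀ k, u (-k) = starRingEnd ℂ (u k)) :
    ∑ k ∈ Box N, ((c k : ℝ) : ℂ) * (starRingEnd ℂ (u k) * (-(Complex.I * (k : ℂ) * Qf S N z w k))) =
    Complex.I * ∑ k ∈ Box N, ∑ m ∈ Box N, ∑ n ∈ Box N,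
      (if k + m + n = 0 then (((k : ℝ) * c k : ℝ) : ℂ) * (S k m n * u k * z m * w n) else 0) := by
  rw [← sum_Box_neg, Finset.mul_sum]
  refine Finset.sum_congr rfl fun k _ => ?_
  rw [← hu, neg_neg, hc]
  unfold Qf
  simp only [Finset.mul_sum, mul_neg, ← Finset.sum_neg_distrib]
  refine Finset.sum_congr rfl fun m _ => Finset.sum_congr rfl fun n _ => ?_
  have : (m + n = -k) ↔ (k + m + n = 0) := ⟨fun h => by omega, fun h => by omega⟩
  simp only [this]
  split_ifs
  · push_cast
    rw [neg_neg]
    ring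
  · simp

lemma tri_swap12 {M : Type*} [AddCommMonoid M] (N : ℕ) (f : ℤ → ℤ → ℤ → M) :
    ∑ k ∈ Box N, ∑ m ∈ Box N, ∑ n ∈ Box N, f k m n =
    ∑ k ∈ Box N, ∑ m ∈ Box N, ∑ n ∈ Box N, f m k n := Finset.sum_comm

lemma tri_swap23 {M : Type*} [AddCommMonoid M] (N : ℕ) (f : ℤ → ℤ → ℤ → M) :
    ∑ k ∈ Box N, ∑ m ∈ Box N, ∑ n ∈ Box N, f k m n =
    ∑ k ∈ Box N, ∑ m ∈ Box N, ∑ n ∈ Box N, f k n m :=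
  Finset.sum_congr rfl fun _ _ => Finset.sum_comm

lemma tri_swap13 {M : Type*} [AddCommMonoid M] (N : ℕ) (f : ℤ → ℤ → ℤ → M) :
    ∑ k ∈ Box N, ∑ m ∈ Box N, ∑ n ∈ Box N, f k m n =
    ∑ k ∈ Box N, ∑ m ∈ Box N, ∑ n ∈ Box N, f n m k := by
  rw [tri_swap12, tri_swap23, tri_swap12]

lemma tri_add {M : Type*} [AddCommMonoid M] (N : ℕ) (f g : ℤ → ℤ → ℤ → M) :
    ∑ k ∈ Box N, ∑ m ∈ Box N, ∑ n ∈ Box N, f k m n +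
    ∑ k ∈ Box N, ∑ m ∈ Box N, ∑ n ∈ Box N, g k m n =
    ∑ k ∈ Box N, ∑ m ∈ Box N, ∑ n ∈ Box N, (f k m n + g k m n) := by
  simp_rw [Finset.sum_add_distrib]

lemma tri_norm_le (N : ℕ) (f : ℤ → ℤ → ℤ → ℂ) (g : ℤ → ℤ → ℤ → ℝ)
    (h : ∀ k m n, ‖f k m n‖ ≤ g k m n) :
    ‖∑ k ∈ Box N, ∑ m ∈ Box N, ∑ n ∈ Box N, f k m n‖ ≤
    ∑ k ∈ Box N, ∑ m ∈ Box N, ∑ n ∈ Box N, g k m n :=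
  norm_sum_le_of_le _ fun k _ => norm_sum_le_of_le _ fun m _ => norm_sum_le_of_le _ fun n _ => h k m n

/-- L² stability estimate. -/
lemma l2_est {S : ℤ → ℤ → ℤ → ℂ} {μ C : ℝ} (hK : Ker S μ C) (hμ : 0 ≤ μ) (N : ℕ)
    (z w : ℤ → ℂ) (hw : ∀ k, w (-k) = starRingEnd ℂ (w k)) :
    |∑ k ∈ Box N, 2 * (starRingEnd ℂ (w k) * (-(Complex.I * (k : ℂ) * Qf S N z w k))).re| ≤
    C * (∑ k ∈ Box N, ‖w k‖ ^ 2) * ∑ n ∈ Box N, |(n : ℝ)| ^ (1 + μ) * ‖z n‖ := by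
  have h1 := energy_tri (S := S) N (fun _ => 1) (fun _ => rfl) w z w hw
  set X := ∑ k ∈ Box N, ∑ m ∈ Box N, ∑ n ∈ Box N,
      (if k + m + n = 0 then (((k : ℝ) * 1 : ℝ) : ℂ) * (S k m n * w k * z m * w n) else 0) with hX
  have h2 : ∑ k ∈ Box N, 2 * (starRingEnd ℂ (w k) * (-(Complex.I * (k : ℂ) * Qf S N z w k))).re
      = (Complex.I * (X + X)).re := by
    rw [mul_add, ← two_mul, ← h1, ← Finset.mul_sum, ← Complex.re_sum]
    simp
  rw [h2]
  refine (Complex.abs_re_le_norm _).trans ?_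
  rw [norm_mul, Complex.norm_I, one_mul]
  have h3 : X + X = ∑ k ∈ Box N, ∑ m ∈ Box N, ∑ n ∈ Box N,
      (if k + m + n = 0 then (-(m : ℂ)) * (S k m n * w k * z m * w n) else 0) := by
    conv_lhs =>
      enter [2]
      rw [hX, tri_swap13]
    rw [hX, tri_add]
    refine Finset.sum_congr rfl fun k _ => Finset.sum_congr rfl fun m _ =>
      Finset.sum_congr rfl fun n _ => ?_
    have e : (n + m + k = 0) ↔ (k + m + n = 0) := ⟨fun h => by omega, fun h => by omega⟩
    simp only [e]
    split_ifs with h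
    · have : S n m k = S k m n := by rw [hK.cyc k m n, hK.cyc m n k, hK.sym n k m]
      rw [this]
      have h' : (k : ℂ) + m + n = 0 := by exact_mod_cast h
      push_cast
      linear_combination (S k m n * w k * z m * w n) * h'
    · simp
  rw [h3, tri_swap23]
  refine (tri_norm_le N _ (fun k n m => C * (if k + n + m = 0 then ‖w k‖ * ‖w n‖ *
    (|(m : ℝ)| ^ (1 + μ) * ‖z m‖) else 0)) ?_).trans ?_
  · intro k n m
    have e : (k + m + n = 0) ↔ (k + n + m = 0) := ⟨fun h => by omega, fun h => by omega⟩
    simp only [e]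
    split_ifs with h
    · simp only [norm_mul, norm_neg]
      have hb : ‖S k m n‖ ≤ C * |(m : ℝ)| ^ μ := (hK.bound k m n).trans
        (mul_le_mul_of_nonneg_left ((min_le_right _ _).trans (min_le_left _ _)) hK.pos.le)
      have hm : ‖(m : ℂ)‖ = |(m : ℝ)| := Complex.norm_intCast m
      rw [hm, Real.rpow_add' (abs_nonneg _) (by linarith), Real.rpow_one]
      calc |(m : ℝ)| * (‖S k m n‖ * ‖w k‖ * ‖z m‖ * ‖w n‖)
          = ‖S k m n‖ * (|(m : ℝ)| * ‖w k‖ * ‖z m‖ * ‖w n‖) := by ring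
        _ ≤ C * |(m : ℝ)| ^ μ * (|(m : ℝ)| * ‖w k‖ * ‖z m‖ * ‖w n‖) :=
            mul_le_mul_of_nonneg_right hb (by positivity)
        _ = _ := by ring
    · simp
  · simp_rw [← Finset.mul_sum]
    rw [mul_assoc]
    exact mul_le_mul_of_nonneg_left (tri_le N (fun k => ‖w k‖) _ (fun n => by positivity)) hK.pos.le

/-- Hˢ energy estimate. -/
lemma hs_est {S : ℤ → ℤ → ℤ → ℂ} {μ C s Cs : ℝ} (hK : Ker S μ C) (hμ : 0 ≤ μ) (hCs0 : 0 ≤ Cs)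
    (hCs : ∀ k m n : ℝ, k + m + n = 0 →
      |k * |k| ^ (2 * s) + m * |m| ^ (2 * s) + n * |n| ^ (2 * s)| ≤
        Cs * (|k| ^ s * |m| ^ s * |n| + |n| ^ s * |k| ^ s * |m| + |m| ^ s * |n| ^ s * |k|))
    (N : ℕ) (u : ℤ → ℂ) (hu : ∀ k, u (-k) = starRingEnd ℂ (u k)) :
    |∑ k ∈ Box N, |(k : ℝ)| ^ (2 * s) *
      (2 * (starRingEnd ℂ (u k) * (-(Complex.I * (k : ℂ) * Qf S N u u k))).re)| ≤
    2 * (C * Cs) * (∑ k ∈ Box N, |(k : ℝ)| ^ (2 * s) * ‖u k‖ ^ 2) *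
      ∑ n ∈ Box N, |(n : ℝ)| ^ (1 + μ) * ‖u n‖ := by
  have h1 := energy_tri (S := S) N (fun k => |(k : ℝ)| ^ (2 * s)) (fun _ => by simp) u u u hu
  set X := ∑ k ∈ Box N, ∑ m ∈ Box N, ∑ n ∈ Box N,
      (if k + m + n = 0 then (((k : ℝ) * |(k : ℝ)| ^ (2 * s) : ℝ) : ℂ) *
        (S k m n * u k * u m * u n) else 0) with hX
  have h2 : ∑ k ∈ Box N, |(k : ℝ)| ^ (2 * s) *
      (2 * (starRingEnd ℂ (u k) * (-(Complex.I * (k : ℂ) * Qf S N u u k))).re)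
      = 2 / 3 * (Complex.I * (X + X + X)).re := by
    have : (Complex.I * (X + X + X)).re = 3 * (Complex.I * X).re := by
      simp only [Complex.mul_re, Complex.add_re, Complex.add_im, Complex.I_re, Complex.I_im]; ring
    rw [this, ← h1, Complex.re_sum, ← mul_assoc, Finset.mul_sum]
    refine Finset.sum_congr rfl fun k _ => ?_
    rw [Complex.re_ofReal_mul]
    ring
  rw [h2, abs_mul]
  have h2' := (Complex.abs_re_le_norm (Complex.I * (X + X + X)))
  rw [norm_mul, Complex.norm_I, one_mul] at h2'
  have s12 : ∀ k m n, S m k n = S k m n := fun k m n => by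
    rw [hK.sym m k n, hK.cyc k m n]
  have s13 : ∀ k m n, S n m k = S k m n := fun k m n => by
    rw [hK.cyc k m n, hK.cyc m n k, hK.sym n k m]
  have h3 : X + X + X = ∑ k ∈ Box N, ∑ m ∈ Box N, ∑ n ∈ Box N,
      (if k + m + n = 0 then (((k : ℝ) * |(k : ℝ)| ^ (2 * s) + (m : ℝ) * |(m : ℝ)| ^ (2 * s)
        + (n : ℝ) * |(n : ℝ)| ^ (2 * s) : ℝ) : ℂ) *
        (S k m n * u k * u m * u n) else 0) := by
    conv_lhs =>
      enter [2]
      rw [hX, tri_swap13]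
    conv_lhs =>
      enter [1, 2]
      rw [hX, tri_swap12]
    rw [hX, tri_add, tri_add]
    refine Finset.sum_congr rfl fun k _ => Finset.sum_congr rfl fun m _ =>
      Finset.sum_congr rfl fun n _ => ?_
    have e : (n + m + k = 0) ↔ (k + m + n = 0) := ⟨fun h => by omega, fun h => by omega⟩
    have e' : (m + k + n = 0) ↔ (k + m + n = 0) := ⟨fun h => by omega, fun h => by omega⟩
    simp only [e, e']
    split_ifs with h
    · rw [s12 k m n, s13 k m n]
      push_cast
      ring
    · simp
  -- the elementary summand
  set Y := ∑ k ∈ Box N, ∑ m ∈ Box N, ∑ n ∈ Box N,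
      (if k + m + n = 0 then |(k : ℝ)| ^ s * |(m : ℝ)| ^ s * |(n : ℝ)| *
        (‖S k m n‖ * ‖u k‖ * ‖u m‖ * ‖u n‖) else 0) with hY
  have h4 : ‖X + X + X‖ ≤ Cs * (Y + Y + Y) := by
    rw [h3]
    conv_rhs =>
      enter [2, 2]
      rw [hY, tri_swap13]
    conv_rhs =>
      enter [2, 1, 2]
      rw [hY, tri_swap23]
    rw [hY, tri_add, tri_add]
    simp_rw [Finset.mul_sum]
    refine tri_norm_le N _ _ fun k m n => ?_
    have e : (n + m + k = 0) ↔ (k + m + n = 0) := ⟨fun h => by omega, fun h => by omega⟩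
    have e' : (k + n + m = 0) ↔ (k + m + n = 0) := ⟨fun h => by omega, fun h => by omega⟩
    simp only [e, e']
    split_ifs with h
    · rw [s13 k m n, ← hK.sym k m n, norm_mul, Complex.norm_real, Real.norm_eq_abs]
      have h' : (k : ℝ) + m + n = 0 := by exact_mod_cast h
      refine (mul_le_mul_of_nonneg_right (hCs k m n h') (norm_nonneg _)).trans (le_of_eq ?_)
      simp only [norm_mul]
      ring
    · simp
  have h5 : Y ≤ C * ((∑ k ∈ Box N, (|(k : ℝ)| ^ s * ‖u k‖) ^ 2) *
      ∑ n ∈ Box N, |(n : ℝ)| ^ (1 + μ) * ‖u n‖) := by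
    refine le_trans ?_ (mul_le_mul_of_nonneg_left (tri_le N (fun k => |(k : ℝ)| ^ s * ‖u k‖)
      (fun n => |(n : ℝ)| ^ (1 + μ) * ‖u n‖) (fun n => by positivity)) hK.pos.le)
    rw [hY]
    simp_rw [Finset.mul_sum]
    refine Finset.sum_le_sum fun k _ => Finset.sum_le_sum fun m _ =>
      Finset.sum_le_sum fun n _ => ?_
    split_ifs
    · have hb : ‖S k m n‖ ≤ C * |(n : ℝ)| ^ μ := (hK.bound k m n).trans
        (mul_le_mul_of_nonneg_left ((min_le_right _ _).trans (min_le_right _ _)) hK.pos.le)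
      rw [Real.rpow_add' (abs_nonneg _) (by linarith), Real.rpow_one]
      calc _ = ‖S k m n‖ * (|(k : ℝ)| ^ s * |(m : ℝ)| ^ s * |(n : ℝ)| *
            (‖u k‖ * ‖u m‖ * ‖u n‖)) := by ring
        _ ≤ C * |(n : ℝ)| ^ μ * (|(k : ℝ)| ^ s * |(m : ℝ)| ^ s * |(n : ℝ)| *
            (‖u k‖ * ‖u m‖ * ‖u n‖)) :=
            mul_le_mul_of_nonneg_right hb (by positivity)
        _ = _ := by ring
    · simp
  have h6 : ∑ k ∈ Box N, (|(k : ℝ)| ^ s * ‖u k‖) ^ 2 =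
      ∑ k ∈ Box N, |(k : ℝ)| ^ (2 * s) * ‖u k‖ ^ 2 := by
    refine Finset.sum_congr rfl fun k _ => ?_
    rw [mul_pow, ← Real.rpow_natCast, ← Real.rpow_mul (abs_nonneg _)]
    norm_num [mul_comm]
  rw [h6] at h5
  have h7 := mul_le_mul_of_nonneg_left h5 hCs0
  rw [abs_of_pos (by norm_num : (0:ℝ) < 2 / 3)]
  nlinarith [h2', h4, h7]

lemma hasSum_Mconst {σ : ℝ} (hσ : 1 / 2 < σ) :
    HasSum (fun n : ℤ => |(n : ℝ)| ^ (-(2 * σ))) (Mconst σ ^ 2) := by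
  have h0 : Summable (fun n : ℕ => ((n : ℝ) + 1) ^ (-(2 * σ))) := by
    have := (summable_nat_add_iff 1).2 ((Real.summable_nat_rpow (p := -(2 * σ))).2 (by linarith))
    simpa using this
  have hnn : 0 ≤ ∑' n : ℕ, ((n : ℝ) + 1) ^ (-(2 * σ)) := tsum_nonneg fun n => by positivity
  have hM : Mconst σ ^ 2 = (∑' n : ℕ, ((n : ℝ) + 1) ^ (-(2 * σ))) +
      ∑' n : ℕ, ((n : ℝ) + 1) ^ (-(2 * σ)) := by
    unfold Mconst
    rw [Real.sq_sqrt (by positivity)]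
    ring
  have h0' := h0.hasSum
  rw [hM]
  generalize (∑' n : ℕ, ((n : ℝ) + 1) ^ (-(2 * σ))) = T at h0'
  have h1 : HasSum (fun n : ℕ => |((n : ℤ) : ℝ)| ^ (-(2 * σ))) T := by
    refine (hasSum_nat_add_iff' 1).1 ?_
    simp only [Finset.range_one, Finset.sum_singleton, Nat.cast_zero, Int.cast_zero, abs_zero]
    rw [Real.zero_rpow (by linarith), sub_zero]
    have e : (fun n : ℕ => |(((n + 1 : ℕ) : ℤ) : ℝ)| ^ (-(2 * σ))) =
        fun n : ℕ => ((n : ℝ) + 1) ^ (-(2 * σ)) := by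
      funext n
      push_cast
      rw [abs_of_nonneg (by positivity)]
    rw [e]
    exact h0'
  have h2 : HasSum (fun n : ℕ => |((-((n : ℤ) + 1) : ℤ) : ℝ)| ^ (-(2 * σ))) T := by
    have e : (fun n : ℕ => |((-((n : ℤ) + 1) : ℤ) : ℝ)| ^ (-(2 * σ))) =
        fun n : ℕ => ((n : ℝ) + 1) ^ (-(2 * σ)) := by
      funext n
      rw [Int.cast_neg, abs_neg]
      push_cast
      rw [abs_of_nonneg (by positivity)]
    rw [e]
    exact h0'
  exact HasSum.of_nat_of_neg_add_one h1 h2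

lemma Mconst_nonneg (σ : ℝ) : 0 ≤ Mconst σ := Real.sqrt_nonneg _

lemma sq_wt (s : ℝ) (k : ℤ) (x : ℝ) :
    (|(k : ℝ)| ^ s * x) ^ 2 = |(k : ℝ)| ^ (2 * s) * x ^ 2 := by
  rw [mul_pow, ← Real.rpow_natCast, ← Real.rpow_mul (abs_nonneg _)]
  norm_num [mul_comm]

lemma l1_le {s ν : ℝ} (hs : ν + 1 / 2 < s) (u : ℤ → ℂ) (hu : u 0 = 0) (F : Finset ℤ) :
    ∑ n ∈ F, |(n : ℝ)| ^ ν * ‖u n‖ ≤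
      Mconst (s - ν) * √(∑ k ∈ F, |(k : ℝ)| ^ (2 * s) * ‖u k‖ ^ 2) := by
  have h1 : ∀ n : ℤ, |(n : ℝ)| ^ ν * ‖u n‖ =
      |(n : ℝ)| ^ (-(s - ν)) * (|(n : ℝ)| ^ s * ‖u n‖) := by
    intro n
    rcases eq_or_ne n 0 with rfl | hn
    · simp [hu]
    · rw [← mul_assoc, ← Real.rpow_add (by positivity)]
      ring_nf
  simp_rw [h1]
  refine (Real.sum_mul_le_sqrt_mul_sqrt _ _ _).trans ?_
  simp_rw [sq_wt]
  refine mul_le_mul_of_nonneg_right ?_ (Real.sqrt_nonneg _)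
  rw [← Real.sqrt_sq (Mconst_nonneg (s - ν))]
  refine Real.sqrt_le_sqrt ?_
  have h2 := hasSum_Mconst (σ := s - ν) (by linarith)
  refine le_trans (le_of_eq ?_) (sum_le_hasSum F (fun n _ => by positivity) h2)
  refine Finset.sum_congr rfl fun n _ => ?_
  rw [← Real.rpow_natCast, ← Real.rpow_mul (abs_nonneg _)]
  norm_num
  ring_nf

/-- Summability of the squared Sobolev norm. -/
def SumG (s : ℝ) (u : ℤ → ℂ) : Prop :=
  Summable fun k : ℤ => |(k : ℝ)| ^ (2 * s) * ‖u k‖ ^ 2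

lemma Gs_nonneg (s : ℝ) (u : ℤ → ℂ) : 0 ≤ Gs s u := tsum_nonneg fun k => by positivity

lemma sum_le_Gs {s : ℝ} {u : ℤ → ℂ} (h : SumG s u) (F : Finset ℤ) :
    ∑ k ∈ F, |(k : ℝ)| ^ (2 * s) * ‖u k‖ ^ 2 ≤ Gs s u :=
  h.sum_le_tsum F (fun k _ => by positivity)

lemma hnorm_eq (s : ℝ) (u : ℤ → ℂ) : hnorm s u = √(Gs s u) := by
  unfold hnorm Gs
  rw [Real.sqrt_eq_rpow]

lemma one_le_abs {n : ℤ} (hn : n ≠ 0) : (1 : ℝ) ≤ |(n : ℝ)| := by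
  have : (1 : ℤ) ≤ |n| := Int.one_le_abs hn
  exact_mod_cast this

lemma wt_mono {ν s : ℝ} (h : ν ≤ s) {u : ℤ → ℂ} (hu : u 0 = 0) (n : ℤ) :
    |(n : ℝ)| ^ ν * ‖u n‖ ≤ |(n : ℝ)| ^ s * ‖u n‖ := by
  rcases eq_or_ne n 0 with rfl | hn
  · simp [hu]
  · exact mul_le_mul_of_nonneg_right (Real.rpow_le_rpow_of_exponent_le (one_le_abs hn) h)
      (norm_nonneg _)

lemma norm_sq_le_Gs {s : ℝ} (hs : 0 ≤ s) {u : ℤ → ℂ} (hu : u 0 = 0) (h : SumG s u) (k : ℤ) :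
    ‖u k‖ ^ 2 ≤ Gs s u := by
  have h1 := wt_mono hs hu k
  rw [Real.rpow_zero, one_mul] at h1
  have h2 := sum_le_Gs h {k}
  rw [Finset.sum_singleton, ← sq_wt] at h2
  exact (pow_le_pow_left₀ (norm_nonneg _) h1 2).trans h2

lemma Ker.b2 {S : ℤ → ℤ → ℤ → ℂ} {μ C : ℝ} (hK : Ker S μ C) (k m n : ℤ) :
    ‖S k m n‖ ≤ C * |(m : ℝ)| ^ μ := (hK.bound k m n).trans
        (mul_le_mul_of_nonneg_left ((min_le_right _ _).trans (min_le_left _ _)) hK.pos.le)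

lemma Ker.b3 {S : ℤ → ℤ → ℤ → ℂ} {μ C : ℝ} (hK : Ker S μ C) (k m n : ℤ) :
    ‖S k m n‖ ≤ C * |(n : ℝ)| ^ μ := (hK.bound k m n).trans
        (mul_le_mul_of_nonneg_left ((min_le_right _ _).trans (min_le_right _ _)) hK.pos.le)

lemma term_le {S : ℤ → ℤ → ℤ → ℂ} {μ C s : ℝ} (hK : Ker S μ C) (hμ : 0 ≤ μ) (hs : μ ≤ s)
    {z w : ℤ → ℂ} (hz : z 0 = 0) (hw : w 0 = 0) (k m n : ℤ) :
    ‖S k m n * z m * w n‖ ≤ C * ((|(m : ℝ)| ^ s * ‖z m‖) * (|(n : ℝ)| ^ s * ‖w n‖)) := by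
  rw [norm_mul, norm_mul]
  have h1 := wt_mono hs hz m
  have h2 := wt_mono (hμ.trans hs) hw n
  rw [Real.rpow_zero, one_mul] at h2
  calc ‖S k m n‖ * ‖z m‖ * ‖w n‖ ≤ C * |(m : ℝ)| ^ μ * ‖z m‖ * ‖w n‖ := by
        gcongr; exact hK.b2 k m n
    _ = C * ((|(m : ℝ)| ^ μ * ‖z m‖) * ‖w n‖) := by ring
    _ ≤ _ := by
        have := hK.pos.le
        gcongr

lemma high_le {s : ℝ} (hs : 0 ≤ s) {N : ℕ} (hN : 0 < N) {n : ℤ} (hn : (N : ℤ) < |n|) (x : ℂ) :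
    ‖x‖ ≤ (N : ℝ) ^ (-s) * (|(n : ℝ)| ^ s * ‖x‖) := by
  have hN' : (0 : ℝ) < N := by exact_mod_cast hN
  have h1 : (N : ℝ) ≤ |(n : ℝ)| := by exact_mod_cast hn.le
  have h2 : (N : ℝ) ^ s ≤ |(n : ℝ)| ^ s := Real.rpow_le_rpow hN'.le h1 hs
  have h3 : (1 : ℝ) ≤ (N : ℝ) ^ (-s) * |(n : ℝ)| ^ s := by
    have : (N : ℝ) ^ (-s) * (N : ℝ) ^ s = 1 := by
      rw [← Real.rpow_add hN']; simp
    rw [← this]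
    gcongr
  rw [← mul_assoc]
  exact le_mul_of_one_le_left (norm_nonneg _) h3

lemma term_tail_le {S : ℤ → ℤ → ℤ → ℂ} {μ C s : ℝ} (hK : Ker S μ C) (hμ : 0 ≤ μ) (hs : μ ≤ s)
    {z w : ℤ → ℂ} (hz : z 0 = 0) (hw : w 0 = 0) {N : ℕ} (hN : 0 < N) (k m n : ℤ)
    (h : ¬ (m ∈ Box N ∧ n ∈ Box N)) :
    ‖S k m n * z m * w n‖ ≤
      C * (N : ℝ) ^ (-s) * ((|(m : ℝ)| ^ s * ‖z m‖) * (|(n : ℝ)| ^ s * ‖w n‖)) := by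
  rw [norm_mul, norm_mul]
  have hC := hK.pos.le
  by_cases hm : m ∈ Box N
  · have hn : ¬ n ∈ Box N := fun hn => h ⟨hm, hn⟩
    rw [mem_Box, not_le] at hn
    have h1 := wt_mono hs hz m
    have h2 := high_le (hμ.trans hs) hN hn (w n)
    calc ‖S k m n‖ * ‖z m‖ * ‖w n‖ ≤ C * |(m : ℝ)| ^ μ * ‖z m‖ * ‖w n‖ := by
          gcongr; exact hK.b2 k m n
      _ = C * ((|(m : ℝ)| ^ μ * ‖z m‖) * ‖w n‖) := by ring
      _ ≤ C * ((|(m : ℝ)| ^ s * ‖z m‖) * ((N : ℝ) ^ (-s) * (|(n : ℝ)| ^ s * ‖w n‖))) := by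
          gcongr
      _ = _ := by ring
  · rw [mem_Box, not_le] at hm
    have h1 := wt_mono hs hw n
    have h2 := high_le (hμ.trans hs) hN hm (z m)
    calc ‖S k m n‖ * ‖z m‖ * ‖w n‖ ≤ C * |(n : ℝ)| ^ μ * ‖z m‖ * ‖w n‖ := by
          gcongr; exact hK.b3 k m n
      _ = C * (‖z m‖ * (|(n : ℝ)| ^ μ * ‖w n‖)) := by ring
      _ ≤ C * (((N : ℝ) ^ (-s) * (|(m : ℝ)| ^ s * ‖z m‖)) * (|(n : ℝ)| ^ s * ‖w n‖)) := by
          gcongr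
      _ = _ := by ring

lemma hasSum_avg {s : ℝ} {z w : ℤ → ℂ} (hz : SumG s z) (hw : SumG s w) (k : ℤ) :
    HasSum (fun n : ℤ => (|((k - n : ℤ) : ℝ)| ^ (2 * s) * ‖z (k - n)‖ ^ 2 +
      |(n : ℝ)| ^ (2 * s) * ‖w n‖ ^ 2) / 2) ((Gs s z + Gs s w) / 2) :=
  (((Equiv.subLeft k).hasSum_iff.2 hz.hasSum).add hw.hasSum).div_const 2

lemma prod_le_avg (s : ℝ) (m n : ℤ) (x y : ℝ) :
    (|(m : ℝ)| ^ s * x) * (|(n : ℝ)| ^ s * y) ≤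
    (|(m : ℝ)| ^ (2 * s) * x ^ 2 + |(n : ℝ)| ^ (2 * s) * y ^ 2) / 2 := by
  rw [← sq_wt, ← sq_wt]
  nlinarith [sq_nonneg ((|(m : ℝ)| ^ s * x) - (|(n : ℝ)| ^ s * y))]

lemma summable_aHat {S : ℤ → ℤ → ℤ → ℂ} {μ C s : ℝ} (hK : Ker S μ C) (hμ : 0 ≤ μ) (hs : μ ≤ s)
    {z w : ℤ → ℂ} (hz : z 0 = 0) (hw : w 0 = 0) (hz' : SumG s z) (hw' : SumG s w) (k : ℤ) :
    Summable fun n : ℤ => S (-k) (k - n) n * z (k - n) * w n := by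
  refine Summable.of_norm_bounded ((hasSum_avg hz' hw' k).mul_left C).summable fun n => ?_
  exact (term_le hK hμ hs hz hw _ _ _).trans (mul_le_mul_of_nonneg_left (prod_le_avg _ _ _ _ _) hK.pos.le)

lemma Qf_eq_tsum (S : ℤ → ℤ → ℤ → ℂ) (N : ℕ) (z w : ℤ → ℂ) (k : ℤ) :
    HasSum (fun n : ℤ => if (k - n ∈ Box N ∧ n ∈ Box N) then S (-k) (k - n) n * z (k - n) * w n else 0)
      (Qf S N z w k) := by
  have h : Qf S N z w k = ∑ n ∈ Box N, if (k - n ∈ Box N ∧ n ∈ Box N) then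
      S (-k) (k - n) n * z (k - n) * w n else 0 := by
    unfold Qf
    rw [Finset.sum_comm]
    refine Finset.sum_congr rfl fun n hn => ?_
    have : ∀ m : ℤ, (m + n = k) ↔ (m = k - n) := fun m => ⟨fun h => by omega, fun h => by omega⟩
    simp only [this, Finset.sum_ite_eq', hn, and_true]
  rw [h]
  refine hasSum_sum_of_ne_finset_zero fun n hn => ?_
  simp [hn]

lemma tail_le {S : ℤ → ℤ → ℤ → ℂ} {μ C s : ℝ} (hK : Ker S μ C) (hμ : 0 ≤ μ) (hs : μ ≤ s)
    {u : ℤ → ℂ} (hu : u 0 = 0) (hu' : SumG s u) {N : ℕ} (hN : 0 < N) (k : ℤ) :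
    ‖aHat S u u k - Qf S N u u k‖ ≤ C * (N : ℝ) ^ (-s) * Gs s u := by
  have h1 := ((summable_aHat hK hμ hs hu hu hu' hu' k).hasSum).sub (Qf_eq_tsum S N u u k)
  have h2 : aHat S u u k - Qf S N u u k = _ := h1.tsum_eq.symm
  rw [h2]
  have h3 := (hasSum_avg hu' hu' k).mul_left (C * (N : ℝ) ^ (-s))
  have e : (Gs s u + Gs s u) / 2 = Gs s u := by ring
  rw [e] at h3
  refine tsum_of_norm_bounded h3 fun n => ?_
  have hC := hK.pos.le
  split_ifs with h
  · simp only [sub_self, norm_zero]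
    positivity
  · rw [sub_zero]
    exact (term_tail_le hK hμ hs hu hu hN _ _ _ h).trans
      (mul_le_mul_of_nonneg_left (prod_le_avg _ _ _ _ _) (by positivity))

/-- For sequences supported in the box the truncation is harmless. -/
lemma aHat_eq_Qf {S : ℤ → ℤ → ℤ → ℂ} {N : ℕ} {u : ℤ → ℂ} (hu : ∀ k, k ∉ Box N → u k = 0) (k : ℤ) :
    aHat S u u k = Qf S N u u k := by
  rw [← (Qf_eq_tsum S N u u k).tsum_eq]
  unfold aHat
  refine tsum_congr fun n => ?_
  split_ifs with h
  · rfl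
  · by_cases hn : n ∈ Box N
    · have : k - n ∉ Box N := fun h' => h ⟨h', hn⟩
      simp [hu _ this]
    · simp [hu _ hn]

/-- Bilinear difference. -/
lemma Qf_diff {S : ℤ → ℤ → ℤ → ℂ} {μ C : ℝ} (hK : Ker S μ C) (N : ℕ) (u v : ℤ → ℂ) (k : ℤ) :
    Qf S N u u k - Qf S N v v k = Qf S N (fun j => u j + v j) (fun j => u j - v j) k := by
  have h1 : ∀ a b : ℤ → ℂ, Qf S N a b k = Qf S N b a k := by
    intro a b
    unfold Qf
    rw [Finset.sum_comm]
    refine Finset.sum_congr rfl fun m _ => Finset.sum_congr rfl fun n _ => ?_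
    rw [add_comm n m, hK.sym]
    split_ifs <;> ring
  have h2 : Qf S N (fun j => u j + v j) (fun j => u j - v j) k =
      Qf S N u u k - Qf S N u v k + Qf S N v u k - Qf S N v v k := by
    unfold Qf
    simp only [← Finset.sum_sub_distrib, ← Finset.sum_add_distrib]
    refine Finset.sum_congr rfl fun m _ => Finset.sum_congr rfl fun n _ => ?_
    split_ifs <;> ring
  rw [h2, h1 u v]
  ring

lemma conj_aHat {S : ℤ → ℤ → ℤ → ℂ} {μ C : ℝ} (hK : Ker S μ C) (u : ℤ → ℂ)
    (hu : ∀ k, u (-k) = starRingEnd ℂ (u k)) (k : ℤ) :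
    aHat S u u (-k) = starRingEnd ℂ (aHat S u u k) := by
  unfold aHat
  rw [Complex.conj_tsum, ← (Equiv.neg ℤ).tsum_eq]
  refine tsum_congr fun n => ?_
  simp only [Equiv.neg_apply, map_mul]
  rw [hK.real, hu n, ← hu (k - n)]
  congr 3 <;> ring_nf

lemma gron_fwd {h h' : ℝ → ℝ} {T a ε : ℝ} (ha : 0 < a) (hε : 0 ≤ ε)
    (hd : ∀ t, |t| < T → HasDerivAt h (h' t) t)
    (hb : ∀ t, |t| < T → |h' t| ≤ a * |h t| + ε) (h0 : h 0 = 0) (t : ℝ) (ht0 : 0 ≤ t) (ht : t < T) :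
    |h t| ≤ ε / a * (Real.exp (a * T) - 1) := by
  have key : ∀ x ∈ Set.Icc (0 : ℝ) t, |x| < T := fun x hx => by
    rw [abs_of_nonneg hx.1]; exact hx.2.trans_lt ht
  have := norm_le_gronwallBound_of_norm_deriv_right_le (f := h) (f' := h') (δ := 0) (K := a) (ε := ε)
    (a := 0) (b := t) (fun x hx => (hd x (key x hx)).continuousAt.continuousWithinAt)
    (fun x hx => (hd x (key x ⟨hx.1, hx.2.le⟩)).hasDerivWithinAt) (by simp [h0])
    (fun x hx => hb x (key x ⟨hx.1, hx.2.le⟩)) t ⟨ht0, le_rfl⟩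
  rw [Real.norm_eq_abs, gronwallBound_of_K_ne_0 ha.ne'] at this
  refine this.trans ?_
  beta_reduce
  rw [zero_mul, zero_add, sub_zero]
  gcongr

lemma gron {h h' : ℝ → ℝ} {T a ε : ℝ} (ha : 0 < a) (hε : 0 ≤ ε)
    (hd : ∀ t, |t| < T → HasDerivAt h (h' t) t)
    (hb : ∀ t, |t| < T → |h' t| ≤ a * |h t| + ε) (h0 : h 0 = 0) (t : ℝ) (ht : |t| < T) :
    |h t| ≤ ε / a * (Real.exp (a * T) - 1) := by
  rcases le_total 0 t with h1 | h1
  · exact gron_fwd ha hε hd hb h0 t h1 (by rwa [abs_of_nonneg h1] at ht)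
  · have := gron_fwd (h := fun x => h (-x)) (h' := fun x => -h' (-x)) (T := T) ha hε
      (fun x hx => by
        have := HasDerivAt.scomp x (hd (-x) (by rwa [abs_neg])) (hasDerivAt_neg x)
        rw [neg_one_smul] at this
        exact this)
      (fun x hx => by
        have := hb (-x) (by rwa [abs_neg])
        simpa using this) (by simpa using h0) (-t) (by linarith)
        (by rwa [abs_of_nonpos h1] at ht)
    simpa using this

/-- `u` solves the equations for modes in the box `N`, with Sobolev bound `B`. -/
structure Evo (S : ℤ → ℤ → ℤ → ℂ) (s : ℝ) (N : ℕ) (B T : ℝ) (u : ℝ → ℤ → ℂ) : Prop where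
  zero : ∀ t, |t| < T → u t 0 = 0
  real : ∀ t, |t| < T → ∀ k, u t (-k) = starRingEnd ℂ (u t k)
  sum : ∀ t, |t| < T → SumG s (u t)
  bd : ∀ t, |t| < T → Gs s (u t) ≤ B ^ 2
  der : ∀ t, |t| < T → ∀ k ∈ Box N, HasDerivAt (fun τ => u τ k)
      (-(Complex.I * (k : ℂ) * aHat S (u t) (u t) k)) t

lemma card_Box (N : ℕ) (hN : 0 < N) : ((Box N).card : ℝ) ≤ 3 * N := by
  have : (Box N).card = 2 * N + 1 := by
    unfold Box
    rw [Int.card_Icc]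
    omega
  rw [this]
  have : (1 : ℝ) ≤ N := by exact_mod_cast hN
  push_cast
  linarith

lemma hasDerivAt_energy (N : ℕ) (c : ℤ → ℝ) (w : ℝ → ℤ → ℂ) (w' : ℤ → ℂ) (t : ℝ)
    (h : ∀ k ∈ Box N, HasDerivAt (fun τ => w τ k) (w' k) t) :
    HasDerivAt (fun τ => ∑ k ∈ Box N, c k * ‖w τ k‖ ^ 2)
      (∑ k ∈ Box N, c k * (2 * (starRingEnd ℂ (w t k) * w' k).re)) t := by
  refine HasDerivAt.fun_sum fun k hk => ?_
  have := ((h k hk).norm_sq).const_mul (c k)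
  rw [Complex.inner, mul_comm (w' k)] at this
  exact this

/-- The stability defect. -/
noncomputable def stabD (C s a B T : ℝ) (N : ℕ) : ℝ :=
  (12 * C ^ 2 * B ^ 4 * (N : ℝ) ^ (-(2 * s - 3))) / a * (Real.exp (a * T) - 1)

lemma stabD_tendsto {C s a B T : ℝ} (hs : 3 / 2 < s) :
    Tendsto (stabD C s a B T) atTop (nhds 0) := by
  have h1 : Tendsto (fun N : ℕ => (N : ℝ) ^ (-(2 * s - 3))) atTop (nhds 0) :=
    (tendsto_rpow_neg_atTop (by linarith)).comp tendsto_natCast_atTop_atTop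
  have := ((h1.const_mul (12 * C ^ 2 * B ^ 4)).div_const a).mul_const (Real.exp (a * T) - 1)
  simp only [mul_zero, zero_div, zero_mul] at this
  exact this

lemma stab {S : ℤ → ℤ → ℤ → ℂ} {μ C s : ℝ} (hK : Ker S μ C) (hμ : 0 ≤ μ) (hs : μ + 3 / 2 < s)
    {B T : ℝ} (hB : 0 ≤ B) {N : ℕ} (hN : 0 < N) {u v : ℝ → ℤ → ℂ}
    (hu : Evo S s N B T u) (hv : Evo S s N B T v) (h0 : ∀ k ∈ Box N, u 0 k = v 0 k)
    (t : ℝ) (ht : |t| < T) :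
    ∑ k ∈ Box N, ‖u t k - v t k‖ ^ 2 ≤
      stabD C s (2 * C * Mconst (s - (1 + μ)) * B + 1) B T N := by
  set M := Mconst (s - (1 + μ)) with hM
  have hM0 : 0 ≤ M := Mconst_nonneg _
  have hC := hK.pos
  have hNp : (0 : ℝ) < N := by exact_mod_cast hN
  set W : ℝ → ℤ → ℂ := fun t k => u t k - v t k with hW
  set W' : ℝ → ℤ → ℂ := fun t k => -(Complex.I * (k : ℂ) * aHat S (u t) (u t) k) -
    -(Complex.I * (k : ℂ) * aHat S (v t) (v t) k) with hW'
  have hd : ∀ t, |t| < T → HasDerivAt (fun τ => ∑ k ∈ Box N, 1 * ‖W τ k‖ ^ 2)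
      (∑ k ∈ Box N, 1 * (2 * (starRingEnd ℂ (W t k) * W' t k).re)) t := by
    intro t ht
    exact hasDerivAt_energy N (fun _ => 1) W (W' t) t
      fun k hk => (hu.der t ht k hk).sub (hv.der t ht k hk)
  have hb : ∀ t, |t| < T → |∑ k ∈ Box N, 1 * (2 * (starRingEnd ℂ (W t k) * W' t k).re)| ≤
      (2 * C * M * B + 1) * |∑ k ∈ Box N, 1 * ‖W t k‖ ^ 2| +
        12 * C ^ 2 * B ^ 4 * (N : ℝ) ^ (-(2 * s - 3)) := by
    intro t ht
    rw [abs_of_nonneg (a := ∑ k ∈ Box N, 1 * ‖W t k‖ ^ 2) (Finset.sum_nonneg fun k _ => by positivity)]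
    simp only [one_mul]
    set z : ℤ → ℂ := fun k => u t k + v t k with hz
    set e : ℤ → ℂ := fun k => -(Complex.I * (k : ℂ) * ((aHat S (u t) (u t) k - Qf S N (u t) (u t) k)
      - (aHat S (v t) (v t) k - Qf S N (v t) (v t) k))) with he
    have hsplit : ∀ k, W' t k = -(Complex.I * (k : ℂ) * Qf S N z (W t) k) + e k := by
      intro k
      have := Qf_diff hK N (u t) (v t) k
      simp only [hW', he, hz, hW, ← this]
      ring
    have hWr : ∀ k, W t (-k) = starRingEnd ℂ (W t k) := by
      intro k
      simp [hW, hu.real t ht k, hv.real t ht k]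
    have h1 := l2_est hK hμ N z (W t) hWr
    have hroot : ∀ x : ℤ → ℂ, SumG s x → Gs s x ≤ B ^ 2 →
        √(∑ k ∈ Box N, |(k : ℝ)| ^ (2 * s) * ‖x k‖ ^ 2) ≤ B := fun x hx hx' =>
      Real.sqrt_le_iff.2 ⟨hB, (sum_le_Gs hx _).trans hx'⟩
    have h2 : ∑ n ∈ Box N, |(n : ℝ)| ^ (1 + μ) * ‖z n‖ ≤ 2 * M * B := by
      calc ∑ n ∈ Box N, |(n : ℝ)| ^ (1 + μ) * ‖z n‖
          ≤ ∑ n ∈ Box N, (|(n : ℝ)| ^ (1 + μ) * ‖u t n‖ + |(n : ℝ)| ^ (1 + μ) * ‖v t n‖) := by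
            refine Finset.sum_le_sum fun n _ => ?_
            rw [← mul_add]
            gcongr
            exact norm_add_le _ _
        _ ≤ M * B + M * B := by
            rw [Finset.sum_add_distrib]
            exact add_le_add
              ((l1_le (by linarith) (u t) (hu.zero t ht) _).trans
                (mul_le_mul_of_nonneg_left (hroot _ (hu.sum t ht) (hu.bd t ht)) hM0))
              ((l1_le (by linarith) (v t) (hv.zero t ht) _).trans
                (mul_le_mul_of_nonneg_left (hroot _ (hv.sum t ht) (hv.bd t ht)) hM0))
        _ = 2 * M * B := by ring
    have h3 : ∀ k ∈ Box N, ‖e k‖ ≤ N * (2 * C * (N : ℝ) ^ (-s) * B ^ 2) := by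
      intro k hk
      simp only [he, norm_neg, norm_mul, Complex.norm_I, one_mul]
      have hk' : ‖(k : ℂ)‖ ≤ N := by
        rw [Complex.norm_intCast]
        rw [mem_Box] at hk
        exact_mod_cast hk
      refine mul_le_mul hk' ?_ (norm_nonneg _) hNp.le
      refine (norm_sub_le _ _).trans ?_
      have t1 := tail_le hK hμ (by linarith) (hu.zero t ht) (hu.sum t ht) hN k
      have t2 := tail_le hK hμ (by linarith) (hv.zero t ht) (hv.sum t ht) hN k
      have c0 : 0 ≤ C * (N : ℝ) ^ (-s) := by positivity
      have t3 := mul_le_mul_of_nonneg_left (hu.bd t ht) c0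
      have t4 := mul_le_mul_of_nonneg_left (hv.bd t ht) c0
      linarith
    have h4 : ∑ k ∈ Box N, ‖e k‖ ^ 2 ≤ 12 * C ^ 2 * B ^ 4 * (N : ℝ) ^ (-(2 * s - 3)) := by
      calc ∑ k ∈ Box N, ‖e k‖ ^ 2
          ≤ ∑ k ∈ Box N, (N * (2 * C * (N : ℝ) ^ (-s) * B ^ 2)) ^ 2 :=
            Finset.sum_le_sum fun k hk => pow_le_pow_left₀ (norm_nonneg _) (h3 k hk) 2
        _ = (Box N).card * (N * (2 * C * (N : ℝ) ^ (-s) * B ^ 2)) ^ 2 := by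
            rw [Finset.sum_const, nsmul_eq_mul]
        _ ≤ 3 * N * (N * (2 * C * (N : ℝ) ^ (-s) * B ^ 2)) ^ 2 := by
            gcongr
            exact card_Box N hN
        _ = 12 * C ^ 2 * B ^ 4 * (N ^ 3 * ((N : ℝ) ^ (-s)) ^ 2) := by ring
        _ = _ := by
            congr 1
            rw [← Real.rpow_natCast, ← Real.rpow_natCast, ← Real.rpow_mul hNp.le,
              ← Real.rpow_add hNp]
            congr 1
            push_cast
            ring
    have h5 : |∑ k ∈ Box N, 2 * (starRingEnd ℂ (W t k) * e k).re| ≤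
        ∑ k ∈ Box N, ‖W t k‖ ^ 2 + ∑ k ∈ Box N, ‖e k‖ ^ 2 := by
      rw [← Finset.sum_add_distrib]
      refine (Finset.abs_sum_le_sum_abs _ _).trans (Finset.sum_le_sum fun k _ => ?_)
      rw [abs_mul, abs_two]
      have := Complex.abs_re_le_norm (starRingEnd ℂ (W t k) * e k)
      rw [norm_mul, RCLike.norm_conj] at this
      nlinarith [sq_nonneg (‖W t k‖ - ‖e k‖)]
    have h6 : ∑ k ∈ Box N, 2 * (starRingEnd ℂ (W t k) * W' t k).re =
        ∑ k ∈ Box N, 2 * (starRingEnd ℂ (W t k) * (-(Complex.I * (k : ℂ) * Qf S N z (W t) k))).re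
        + ∑ k ∈ Box N, 2 * (starRingEnd ℂ (W t k) * e k).re := by
      rw [← Finset.sum_add_distrib]
      refine Finset.sum_congr rfl fun k _ => ?_
      rw [hsplit, mul_add, Complex.add_re, mul_add]
    rw [h6]
    refine (abs_add_le _ _).trans ?_
    have hh : 0 ≤ ∑ k ∈ Box N, ‖W t k‖ ^ 2 := Finset.sum_nonneg fun k _ => by positivity
    have h7 := mul_le_mul_of_nonneg_left h2 (mul_nonneg hC.le hh)
    linarith
  have hpos : 0 < 2 * C * M * B + 1 := by positivity
  have := gron hpos (by positivity) hd hb (by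
    refine Finset.sum_eq_zero fun k hk => ?_
    simp [hW, h0 k hk]) t ht
  simp only [one_mul] at this
  exact (le_abs_self _).trans this

/-- Uniqueness. -/
lemma evo_unique {S : ℤ → ℤ → ℤ → ℂ} {μ C s : ℝ} (hK : Ker S μ C) (hμ : 0 ≤ μ) (hs : μ + 3 / 2 < s)
    {B T : ℝ} (hB : 0 ≤ B) {u v : ℝ → ℤ → ℂ}
    (hu : ∀ N, Evo S s N B T u) (hv : ∀ N, Evo S s N B T v) (h0 : u 0 = v 0)
    (t : ℝ) (ht : |t| < T) : u t = v t := by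
  funext k
  have h1 : ∀ᶠ N : ℕ in atTop, ‖u t k - v t k‖ ^ 2 ≤
      stabD C s (2 * C * Mconst (s - (1 + μ)) * B + 1) B T N := by
    filter_upwards [eventually_gt_atTop k.natAbs] with N hN
    have := stab hK hμ hs hB (N := N) (by omega) (hu N) (hv N) (by simp [h0]) t ht
    refine le_trans ?_ this
    have hk : k ∈ Box N := by rw [mem_Box, Int.abs_eq_natAbs]; omega
    exact Finset.single_le_sum (f := fun k => ‖u t k - v t k‖ ^ 2) (fun i _ => by positivity) hk
  have h2 := ge_of_tendsto (stabD_tendsto (by linarith)) h1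
  have h3 : ‖u t k - v t k‖ ^ 2 = 0 := le_antisymm h2 (by positivity)
  have h4 : ‖u t k - v t k‖ = 0 := by simpa using h3
  exact sub_eq_zero.1 (norm_eq_zero.1 h4)

lemma riccati_fwd {g g' : ℝ → ℝ} {T K X : ℝ} (hK : 0 ≤ K) (hX : 0 ≤ X)
    (hg : ∀ t, 0 ≤ g t)
    (hd : ∀ t, |t| < T → HasDerivAt g (g' t) t)
    (hb : ∀ t, |t| < T → |g' t| ≤ 2 * K * (g t * √(g t))) (h0 : g 0 ≤ X ^ 2)
    (t : ℝ) (ht0 : 0 ≤ t) (ht : t < T) :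
    √(g t) * (1 - K * X * t) ≤ X := by
  have key : ∀ x ∈ Set.Icc (0 : ℝ) t, |x| < T := fun x hx => by
    rw [abs_of_nonneg hx.1]; exact hx.2.trans_lt ht
  have step : ∀ ε : ℝ, 0 < ε → √(g t) * (1 - K * √(X ^ 2 + ε) * t) ≤ √(X ^ 2 + ε) := by
    intro ε hε
    set y : ℝ → ℝ := fun x => √(g x + ε) with hy
    have hyp : ∀ x, 0 < y x := fun x => Real.sqrt_pos.2 (by linarith [hg x])
    have hysq : ∀ x, y x ^ 2 = g x + ε := fun x => Real.sq_sqrt (by linarith [hg x])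
    have hdy : ∀ x, |x| < T → HasDerivAt y (g' x / (2 * y x)) x := by
      intro x hx
      exact ((hd x hx).add_const ε).sqrt (by linarith [hg x])
    have hdi : ∀ x, |x| < T → HasDerivAt (fun x => (y x)⁻¹ + K * x)
        (-(g' x / (2 * y x)) / (y x) ^ 2 + K * 1) x := by
      intro x hx
      exact ((hdy x hx).inv (hyp x).ne').add ((hasDerivAt_id x).const_mul K)
    have hmono : MonotoneOn (fun x => (y x)⁻¹ + K * x) (Set.Icc 0 t) := by
      refine monotoneOn_of_deriv_nonneg (convex_Icc 0 t)
        (fun x hx => (hdi x (key x hx)).continuousAt.continuousWithinAt)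
        (fun x hx => (hdi x (key x (interior_subset hx))).differentiableAt.differentiableWithinAt) ?_
      intro x hx
      have hx' := key x (interior_subset hx)
      rw [(hdi x hx').deriv]
      have h1 := (le_abs_self _).trans (hb x hx')
      have h2 : √(g x) ≤ y x := Real.sqrt_le_sqrt (by linarith)
      have h3 : g x ≤ y x ^ 2 := by rw [hysq]; linarith
      have h4 : g x * √(g x) ≤ y x ^ 2 * y x := mul_le_mul h3 h2 (Real.sqrt_nonneg _) (by positivity)
      have h5 : g' x ≤ 2 * K * (y x ^ 2 * y x) :=
        h1.trans (mul_le_mul_of_nonneg_left h4 (by positivity))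
      have h6 : g' x / (2 * y x) / (y x) ^ 2 ≤ K := by
        rw [div_div, div_le_iff₀ (by have := hyp x; positivity)]
        linarith
      rw [neg_div]
      linarith
    have h1 := hmono (Set.left_mem_Icc.2 ht0) (Set.right_mem_Icc.2 ht0) ht0
    simp only [mul_zero, add_zero] at h1
    have hY0 : y 0 ≤ √(X ^ 2 + ε) := Real.sqrt_le_sqrt (by linarith)
    have hYp : 0 < √(X ^ 2 + ε) := Real.sqrt_pos.2 (by positivity)
    have h2 : (√(X ^ 2 + ε))⁻¹ ≤ (y t)⁻¹ + K * t := (inv_anti₀ (hyp 0) hY0).trans h1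
    have h3 : √(g t) ≤ y t := Real.sqrt_le_sqrt (by linarith)
    set Y := √(X ^ 2 + ε)
    have h4 : y t * (1 - K * Y * t) ≤ Y := by
      have := mul_le_mul_of_nonneg_left h2 (mul_pos (hyp t) hYp).le
      have e1 : y t * Y * Y⁻¹ = y t := by field_simp
      have e2 : y t * Y * ((y t)⁻¹ + K * t) = Y + y t * Y * K * t := by
        have := (hyp t).ne'
        field_simp
      rw [e1, e2] at this
      linarith
    rcases le_total 0 (1 - K * Y * t) with h | h
    · exact (mul_le_mul_of_nonneg_right h3 h).trans h4
    · exact (mul_nonpos_of_nonneg_of_nonpos (Real.sqrt_nonneg _) h).trans hYp.le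
  have hl : Tendsto (fun ε : ℝ => √(X ^ 2 + ε)) (nhdsWithin 0 (Set.Ioi 0)) (nhds X) := by
    have : Tendsto (fun ε : ℝ => √(X ^ 2 + ε)) (nhds 0) (nhds √(X ^ 2 + 0)) :=
      (Continuous.tendsto (by fun_prop) 0)
    rw [add_zero, Real.sqrt_sq hX] at this
    exact this.mono_left nhdsWithin_le_nhds
  refine le_of_tendsto_of_tendsto
    ((tendsto_const_nhds.sub ((hl.const_mul K).mul_const t)).const_mul √(g t)) hl ?_
  filter_upwards [self_mem_nhdsWithin] with ε hε
  exact step ε hε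

lemma riccati {g g' : ℝ → ℝ} {T K X : ℝ} (hK : 0 ≤ K) (hX : 0 ≤ X)
    (hg : ∀ t, 0 ≤ g t)
    (hd : ∀ t, |t| < T → HasDerivAt g (g' t) t)
    (hb : ∀ t, |t| < T → |g' t| ≤ 2 * K * (g t * √(g t))) (h0 : g 0 ≤ X ^ 2)
    (t : ℝ) (ht : |t| < T) (hT : K * X * T < 1) :
    g t ≤ (X / (1 - K * X * |t|)) ^ 2 := by
  have h1 : √(g t) * (1 - K * X * |t|) ≤ X := by
    rcases le_total 0 t with h1 | h1
    · rw [abs_of_nonneg h1] at ht ⊢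
      exact riccati_fwd hK hX hg hd hb h0 t h1 ht
    · rw [abs_of_nonpos h1] at ht ⊢
      have := riccati_fwd (g := fun x => g (-x)) (g' := fun x => -g' (-x)) (T := T) hK hX
        (fun x => hg _)
        (fun x hx => by
          have := HasDerivAt.scomp x (hd (-x) (by rwa [abs_neg])) (hasDerivAt_neg x)
          rw [neg_one_smul] at this
          exact this)
        (fun x hx => by
          have := hb (-x) (by rwa [abs_neg])
          simpa using this) (by simpa using h0) (-t) (by linarith) ht
      simpa using this
  have h2 : 0 < 1 - K * X * |t| := by
    have := mul_le_mul_of_nonneg_left ht.le (mul_nonneg hK hX)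
    linarith
  have h3 : √(g t) ≤ X / (1 - K * X * |t|) := (le_div_iff₀ h2).2 h1
  calc g t = √(g t) ^ 2 := (Real.sq_sqrt (hg t)).symm
    _ ≤ _ := pow_le_pow_left₀ (Real.sqrt_nonneg _) h3 2

lemma ode_cut {E : Type*} [NormedAddCommGroup E] [NormedSpace ℝ E] [FiniteDimensional ℝ E]
    (F : E → E) (hF : ContDiff ℝ 1 F) (x₀ : E) (R T : ℝ) (hR : 0 < R) (hT : 0 < T) :
    ∃ (α : ℝ → E) (χ : ℝ → ℝ), α 0 = x₀ ∧ (∀ t, 0 ≤ χ t ∧ χ t ≤ 1) ∧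
      (∀ t, ‖α t‖ ≤ R → χ t = 1) ∧
      ∀ t, |t| < T → HasDerivAt α (χ t • F (α t)) t := by
  have : CompleteSpace E := FiniteDimensional.complete ℝ E
  let b : ContDiffBump (0 : E) := ⟨R, R + 1, hR, by linarith⟩
  have hsup : HasCompactSupport (fun x => b x • F x) := b.hasCompactSupport.smul_right
  have hcd : ContDiff ℝ 1 (fun x => b x • F x) := b.contDiff.smul hF
  obtain ⟨K, hK⟩ := hcd.lipschitzWith_of_hasCompactSupport hsup (by simp)
  obtain ⟨L, hL⟩ := hsup.exists_bound_of_continuous hcd.continuous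
  have hL0 : 0 ≤ L := (norm_nonneg _).trans (hL 0)
  have h0 : (0 : ℝ) ∈ Set.Icc (-T) T := ⟨by linarith, by linarith⟩
  have hP : IsPicardLindelof (fun _ => fun x => b x • F x) (⟨0, h0⟩ : Set.Icc (-T) T) x₀
      ⟨L * T, by positivity⟩ 0 ⟨L, hL0⟩ K := by
    refine IsPicardLindelof.of_time_independent (fun x _ => hL x) (hK.lipschitzOnWith) ?_
    simp
    exact le_rfl
  obtain ⟨α, hα0, hα⟩ := hP.exists_eq_forall_mem_Icc_hasDerivWithinAt₀
  refine ⟨α, fun t => b (α t), hα0, fun t => ⟨b.nonneg, b.le_one⟩, fun t ht => ?_, fun t ht => ?_⟩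
  · exact b.one_of_mem_closedBall (by simpa [b] using ht)
  · rw [abs_lt] at ht
    exact (hα t ⟨ht.1.le, ht.2.le⟩).hasDerivAt (Icc_mem_nhds ht.1 ht.2)

lemma const_of_deriv {φ : ℝ → ℂ} {T : ℝ} (h : ∀ t, |t| < T → HasDerivAt φ 0 t) (t : ℝ)
    (ht : |t| < T) : φ t = φ 0 := by
  have hT : 0 < T := (abs_nonneg t).trans_lt ht
  have h' : ∀ x ∈ Set.Ioo (-T) T, HasDerivAt φ 0 x := fun x hx => h x (abs_lt.2 hx)
  refine isOpen_Ioo.is_const_of_deriv_eq_zero isPreconnected_Ioo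
    (fun x hx => (h' x hx).differentiableAt.differentiableWithinAt)
    (fun x hx => (h' x hx).deriv) (abs_lt.1 ht) ⟨by linarith, hT⟩

/-- Extension by zero. -/
noncomputable def ext0 (N : ℕ) (x : (Box N) → ℂ) (k : ℤ) : ℂ :=
  if h : k ∈ Box N then x ⟨k, h⟩ else 0

/-- Galerkin vector field. -/
noncomputable def gal (S : ℤ → ℤ → ℤ → ℂ) (N : ℕ) (u : ℤ → ℂ) (k : ℤ) : ℂ :=
  -(Complex.I * (k : ℂ) * Qf S N u u k)

lemma gal_conj {S : ℤ → ℤ → ℤ → ℂ} {μ C : ℝ} (hK : Ker S μ C) (N : ℕ) (u : ℤ → ℂ)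
    (hu : ∀ k, u (-k) = starRingEnd ℂ (u k)) (hs : ∀ k, k ∉ Box N → u k = 0) (k : ℤ) :
    starRingEnd ℂ (gal S N u (-k)) = gal S N u k := by
  unfold gal
  rw [← aHat_eq_Qf hs, ← aHat_eq_Qf hs, conj_aHat hK u hu]
  simp

lemma contDiff_ext0 (N : ℕ) (k : ℤ) : ContDiff ℝ 1 (fun x => ext0 N x k) := by
  unfold ext0
  split_ifs with h
  · exact contDiff_apply ℝ ℂ (⟨k, h⟩ : Box N)
  · exact contDiff_const

lemma contDiff_gal (S : ℤ → ℤ → ℤ → ℂ) (N : ℕ) (k : ℤ) :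
    ContDiff ℝ 1 (fun x => gal S N (ext0 N x) k) := by
  unfold gal Qf
  refine (contDiff_const.mul (ContDiff.sum fun m _ => ContDiff.sum fun n _ => ?_)).neg
  split_ifs
  · exact (contDiff_const.mul (contDiff_ext0 N m)).mul (contDiff_ext0 N n)
  · exact contDiff_const

lemma galerkin {S : ℤ → ℤ → ℤ → ℂ} {μ C s Cs : ℝ} (hK : Ker S μ C) (hμ : 0 ≤ μ)
    (hs : μ + 3 / 2 < s) (hCs0 : 0 ≤ Cs)
    (hCs : ∀ k m n : ℝ, k + m + n = 0 →
      |k * |k| ^ (2 * s) + m * |m| ^ (2 * s) + n * |n| ^ (2 * s)| ≤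
        Cs * (|k| ^ s * |m| ^ s * |n| + |n| ^ s * |k| ^ s * |m| + |m| ^ s * |n| ^ s * |k|))
    (f : ℤ → ℂ) (hf : InHs s f) (N : ℕ) {T K : ℝ} (hT : 0 < T)
    (hKs : K = C * Cs * Mconst (s - (1 + μ))) (hKT : K * √(Gs s f) * T < 1) :
    ∃ u : ℝ → ℤ → ℂ, (∀ k ∈ Box N, u 0 k = f k) ∧
      (∀ t, |t| < T → Gs s (u t) ≤ (√(Gs s f) / (1 - K * √(Gs s f) * |t|)) ^ 2) ∧
      Evo S s N (√(Gs s f) / (1 - K * √(Gs s f) * T)) T u := by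
  obtain ⟨hf0, hfr, hfs⟩ := hf
  have hK0 : 0 ≤ K := by
    rw [hKs]; exact mul_nonneg (mul_nonneg hK.pos.le hCs0) (Mconst_nonneg _)
  set X := √(Gs s f) with hX
  have hX0 : 0 ≤ X := Real.sqrt_nonneg _
  set Bd := X / (1 - K * X * T) with hBd
  have hBd0 : 0 ≤ Bd := div_nonneg hX0 (by linarith)
  let Fv : ((Box N) → ℂ) → ((Box N) → ℂ) := fun x k =>
    (gal S N (ext0 N x) k + starRingEnd ℂ (gal S N (ext0 N x) (-k))) / 2
  have hFv : ContDiff ℝ 1 Fv := by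
    refine contDiff_pi.2 fun k => ?_
    refine ContDiff.div_const (ContDiff.add (contDiff_gal S N k) ?_) 2
    exact Complex.conjCLE.contDiff.comp (contDiff_gal S N (-k))
  obtain ⟨α, χ, hα0, hχ, hχ1, hα⟩ := ode_cut Fv hFv (fun k => f k) (Bd + 1) T (by linarith) hT
  set u : ℝ → ℤ → ℂ := fun t => ext0 N (α t) with hu
  have hin : ∀ t k (h : k ∈ Box N), u t k = α t ⟨k, h⟩ := fun t k h => by simp [hu, ext0, h]
  have hout : ∀ t k, k ∉ Box N → u t k = 0 := fun t k h => by simp [hu, ext0, h]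
  have hu0 : ∀ k ∈ Box N, u 0 k = f k := fun k hk => by rw [hin 0 k hk, hα0]
  have hd0 : ∀ t, |t| < T → ∀ k ∈ Box N, HasDerivAt (fun τ => u τ k)
      ((χ t : ℂ) * ((gal S N (u t) k + starRingEnd ℂ (gal S N (u t) (-k))) / 2)) t := by
    intro t ht k hk
    have := (hasDerivAt_pi.1 (hα t ht)) ⟨k, hk⟩
    have e : (fun τ => u τ k) = fun τ => α τ ⟨k, hk⟩ := funext fun τ => hin τ k hk
    rw [e]
    simpa [Fv] using this
  -- reality
  have hreal : ∀ t, |t| < T → ∀ k, u t (-k) = starRingEnd ℂ (u t k) := by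
    intro t ht k
    by_cases hk : k ∈ Box N
    · have hk' : -k ∈ Box N := neg_mem_Box.2 hk
      have hc : ∀ t, |t| < T →
          HasDerivAt (fun τ => u τ (-k) - starRingEnd ℂ (u τ k)) 0 t := by
        intro t ht
        have h1 := hd0 t ht (-k) hk'
        have h2 : HasDerivAt (fun τ => starRingEnd ℂ (u τ k)) _ t :=
          (Complex.conjCLE.toContinuousLinearMap.hasFDerivAt.comp_hasDerivAt t (hd0 t ht k hk))
        have h3 := h1.sub h2
        refine h3.congr_deriv ?_
        have h22 : starRingEnd ℂ (2:ℂ) = 2 := map_ofNat _ 2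
        simp [h22]
        ring
      have := const_of_deriv hc t ht
      rw [hu0 k hk, hu0 (-k) hk', hfr k, sub_self] at this
      exact sub_eq_zero.1 this
    · rw [hout t k hk, hout t (-k) (fun h => hk (neg_mem_Box.1 h))]
      simp
  have hd1 : ∀ t, |t| < T → ∀ k ∈ Box N, HasDerivAt (fun τ => u τ k)
      ((χ t : ℂ) * gal S N (u t) k) t := by
    intro t ht k hk
    refine (hd0 t ht k hk).congr_deriv ?_
    rw [gal_conj hK N (u t) (hreal t ht) (hout t)]
    ring
  have hzero : ∀ t, |t| < T → u t 0 = 0 := by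
    intro t ht
    have h0 : (0 : ℤ) ∈ Box N := by simp [mem_Box]
    have := const_of_deriv (φ := fun τ => u τ 0) (fun t ht => (hd1 t ht 0 h0).congr_deriv (by simp [gal])) t ht
    rw [this, hu0 0 h0, hf0]
  set g : ℝ → ℝ := fun t => ∑ k ∈ Box N, |(k : ℝ)| ^ (2 * s) * ‖u t k‖ ^ 2 with hg
  have hg0 : ∀ t, 0 ≤ g t := fun t => Finset.sum_nonneg fun k _ => by positivity
  have hgd : ∀ t, |t| < T → HasDerivAt g (∑ k ∈ Box N, |(k : ℝ)| ^ (2 * s) *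
      (2 * (starRingEnd ℂ (u t k) * ((χ t : ℂ) * gal S N (u t) k)).re)) t := fun t ht =>
    hasDerivAt_energy N (fun k => |(k : ℝ)| ^ (2 * s)) u _ t (hd1 t ht)
  have hgb : ∀ t, |t| < T → |∑ k ∈ Box N, |(k : ℝ)| ^ (2 * s) *
      (2 * (starRingEnd ℂ (u t k) * ((χ t : ℂ) * gal S N (u t) k)).re)| ≤
      2 * K * (g t * √(g t)) := by
    intro t ht
    have e : ∑ k ∈ Box N, |(k : ℝ)| ^ (2 * s) *
        (2 * (starRingEnd ℂ (u t k) * ((χ t : ℂ) * gal S N (u t) k)).re) =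
        χ t * ∑ k ∈ Box N, |(k : ℝ)| ^ (2 * s) *
        (2 * (starRingEnd ℂ (u t k) * (gal S N (u t) k)).re) := by
      rw [Finset.mul_sum]
      refine Finset.sum_congr rfl fun k _ => ?_
      rw [mul_left_comm (starRingEnd ℂ (u t k)), Complex.re_ofReal_mul]
      ring
    rw [e, abs_mul, abs_of_nonneg (hχ t).1]
    refine (mul_le_of_le_one_left (abs_nonneg _) (hχ t).2).trans ?_
    refine (hs_est hK hμ hCs0 hCs N (u t) (hreal t ht)).trans ?_
    have h1 := l1_le (s := s) (ν := 1 + μ) (by linarith) (u t) (hzero t ht) (Box N)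
    have h2 := mul_le_mul_of_nonneg_left h1
      (mul_nonneg (mul_nonneg two_pos.le (mul_nonneg hK.pos.le hCs0)) (hg0 t))
    refine h2.trans (le_of_eq ?_)
    rw [hKs]
    simp only [hg]
    ring
  have hGs : ∀ t, Gs s (u t) = g t := by
    intro t
    refine tsum_eq_sum fun k hk => ?_
    simp [hout t k hk]
  have hsum : ∀ t, SumG s (u t) := by
    intro t
    refine summable_of_ne_finset_zero (s := Box N) fun k hk => ?_
    simp [hout t k hk]
  have hginit : g 0 ≤ X ^ 2 := by
    rw [hX, Real.sq_sqrt (Gs_nonneg _ _)]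
    refine le_trans (le_of_eq ?_) (sum_le_Gs hfs (Box N))
    refine Finset.sum_congr rfl fun k hk => ?_
    rw [hu0 k hk]
  have hbound : ∀ t, |t| < T → g t ≤ (X / (1 - K * X * |t|)) ^ 2 := fun t ht =>
    riccati hK0 hX0 hg0 hgd hgb hginit t ht hKT
  have hbound2 : ∀ t, |t| < T → g t ≤ Bd ^ 2 := by
    intro t ht
    have h1 : K * X * |t| ≤ K * X * T := mul_le_mul_of_nonneg_left ht.le (mul_nonneg hK0 hX0)
    have h2 : 0 < 1 - K * X * T := by linarith
    refine (hbound t ht).trans (pow_le_pow_left₀ (div_nonneg hX0 (by linarith)) ?_ 2)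
    exact div_le_div_of_nonneg_left hX0 h2 (by linarith)
  refine ⟨u, hu0, fun t ht => (hGs t).trans_le (hbound t ht), hzero, hreal, fun t _ => hsum t,
    fun t ht => (hGs t).trans_le (hbound2 t ht), fun t ht k hk => ?_⟩
  have hχt : χ t = 1 := by
    refine hχ1 t ?_
    refine (pi_norm_le_iff_of_nonneg (by linarith)).2 fun k => ?_
    rw [← hin t k k.2]
    have h1 := norm_sq_le_Gs (s := s) (by linarith) (hzero t ht) (hsum t) (k : ℤ)
    rw [hGs] at h1
    have h2 := abs_le_of_sq_le_sq (h1.trans (hbound2 t ht)) hBd0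
    linarith [le_abs_self ‖u t (k:ℤ)‖]
  refine (hd1 t ht k hk).congr_deriv ?_
  rw [hχt, aHat_eq_Qf (hout t)]
  simp [gal]

lemma Qf_lip (S : ℤ → ℤ → ℤ → ℂ) (M : ℕ) (u v : ℤ → ℂ) (k : ℤ) {B δ : ℝ} (hB : 0 ≤ B) (hδ : 0 ≤ δ)
    (hu : ∀ j, ‖u j‖ ≤ B) (hv : ∀ j, ‖v j‖ ≤ B) (h : ∀ j ∈ Box M, ‖u j - v j‖ ≤ δ) :
    ‖Qf S M u u k - Qf S M v v k‖ ≤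
      (∑ m ∈ Box M, ∑ n ∈ Box M, ‖S (-k) m n‖) * (2 * B * δ) := by
  unfold Qf
  rw [← Finset.sum_sub_distrib, Finset.sum_mul]
  refine (norm_sum_le _ _).trans (Finset.sum_le_sum fun m hm => ?_)
  rw [← Finset.sum_sub_distrib, Finset.sum_mul]
  refine (norm_sum_le _ _).trans (Finset.sum_le_sum fun n hn => ?_)
  have hp : 0 ≤ ‖S (-k) m n‖ * (2 * B * δ) := by positivity
  split_ifs
  · have e : S (-k) m n * u m * u n - S (-k) m n * v m * v n =
        S (-k) m n * (u m * (u n - v n) + (u m - v m) * v n) := by ring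
    rw [e, norm_mul]
    refine mul_le_mul_of_nonneg_left ?_ (norm_nonneg _)
    refine (norm_add_le _ _).trans ?_
    rw [norm_mul, norm_mul]
    have h1 := mul_le_mul (hu m) (h n hn) (norm_nonneg _) hB
    have h2 := mul_le_mul (h m hm) (hv n) (norm_nonneg _) hδ
    linarith
  · simpa using hp

lemma Gs_le_of_limit {s b : ℝ} {un : ℕ → ℤ → ℂ} {u : ℤ → ℂ}
    (hl : ∀ k, Tendsto (fun N => un N k) atTop (nhds (u k)))
    (hs : ∀ N, SumG s (un N)) (hb : ∀ N, Gs s (un N) ≤ b) : SumG s u ∧ Gs s u ≤ b := by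
  have hF : ∀ F : Finset ℤ, ∑ k ∈ F, |(k : ℝ)| ^ (2 * s) * ‖u k‖ ^ 2 ≤ b := by
    intro F
    have : Tendsto (fun N => ∑ k ∈ F, |(k : ℝ)| ^ (2 * s) * ‖un N k‖ ^ 2) atTop
        (nhds (∑ k ∈ F, |(k : ℝ)| ^ (2 * s) * ‖u k‖ ^ 2)) :=
      tendsto_finsetSum _ fun k _ => ((hl k).norm.pow 2).const_mul _
    exact le_of_tendsto' this fun N => (sum_le_Gs (hs N) F).trans (hb N)
  have h1 : SumG s u := summable_of_sum_le (fun k => by positivity) hF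
  exact ⟨h1, h1.tsum_le_of_sum_le hF⟩

lemma coord_le {s : ℝ} (hs : 0 ≤ s) {u : ℤ → ℂ} (hu : u 0 = 0) (h : SumG s u) {B : ℝ} (hB : 0 ≤ B)
    (hb : Gs s u ≤ B ^ 2) (k : ℤ) : ‖u k‖ ≤ B := by
  have h2 := abs_le_of_sq_le_sq ((norm_sq_le_Gs hs hu h k).trans hb) hB
  linarith [le_abs_self ‖u k‖]

lemma local_exist {S : ℤ → ℤ → ℤ → ℂ} {μ C s Cs : ℝ} (hK : Ker S μ C) (hμ : 0 ≤ μ)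
    (hs : μ + 3 / 2 < s) (hCs0 : 0 ≤ Cs)
    (hCs : ∀ k m n : ℝ, k + m + n = 0 →
      |k * |k| ^ (2 * s) + m * |m| ^ (2 * s) + n * |n| ^ (2 * s)| ≤
        Cs * (|k| ^ s * |m| ^ s * |n| + |n| ^ s * |k| ^ s * |m| + |m| ^ s * |n| ^ s * |k|))
    (f : ℤ → ℂ) (hf : InHs s f) {T K : ℝ} (hT : 0 < T)
    (hKs : K = C * Cs * Mconst (s - (1 + μ))) (hKT : K * √(Gs s f) * T < 1) :
    ∃ u : ℝ → ℤ → ℂ, u 0 = f ∧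
      (∀ t, |t| < T → Gs s (u t) ≤ (√(Gs s f) / (1 - K * √(Gs s f) * |t|)) ^ 2) ∧
      ∀ N, Evo S s N (√(Gs s f) / (1 - K * √(Gs s f) * T)) T u := by
  choose U hU0 hUb hUe using fun N : ℕ => galerkin hK hμ hs hCs0 hCs f hf N hT hKs hKT
  set X := √(Gs s f) with hX
  have hX0 : 0 ≤ X := Real.sqrt_nonneg _
  set B := X / (1 - K * X * T) with hBd
  have hB0 : 0 ≤ B := div_nonneg hX0 (by linarith)
  set e : ℕ → ℝ := stabD C s (2 * C * Mconst (s - (1 + μ)) * B + 1) B T with he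
  have het : Tendsto e atTop (nhds 0) := stabD_tendsto (by linarith)
  have hset : Tendsto (fun N => √(e N)) atTop (nhds 0) := by
    simpa using het.sqrt
  have hmono : ∀ {N N' : ℕ}, N ≤ N' → ∀ k ∈ Box N, k ∈ Box N' := by
    intro N N' h k hk
    rw [mem_Box] at hk ⊢
    omega
  have hst : ∀ N N' : ℕ, 0 < N → N ≤ N' → ∀ k ∈ Box N, ∀ t, |t| < T →
      ‖U N t k - U N' t k‖ ≤ √(e N) := by
    intro N N' hN hNN k hk t ht
    have h1 : Evo S s N B T (U N') := ⟨(hUe N').zero, (hUe N').real, (hUe N').sum, (hUe N').bd,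
      fun t ht k hk => (hUe N').der t ht k (hmono hNN k hk)⟩
    have h2 := stab hK hμ hs hB0 hN (hUe N) h1
      (fun k hk => by rw [hU0 N k hk, hU0 N' k (hmono hNN k hk)]) t ht
    refine Real.le_sqrt_of_sq_le (le_trans ?_ h2)
    exact Finset.single_le_sum (f := fun k => ‖U N t k - U N' t k‖ ^ 2) (fun i _ => by positivity) hk
  have hkB : ∀ k : ℤ, ∀ N : ℕ, k.natAbs ≤ N → k ∈ Box N := by
    intro k N h
    rw [mem_Box, Int.abs_eq_natAbs]; omega
  have hlim : ∀ t k, ∃ z : ℂ, |t| < T → Tendsto (fun N => U N t k) atTop (nhds z) := by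
    intro t k
    by_cases ht : |t| < T
    · have hc : CauchySeq (fun N => U N t k) := by
        rw [Metric.cauchySeq_iff']
        intro ε hε
        obtain ⟨N, hN1, hN2⟩ := ((hset.eventually (gt_mem_nhds hε)).and
          (eventually_gt_atTop k.natAbs)).exists
        refine ⟨N, fun n hn => ?_⟩
        rw [dist_comm, dist_eq_norm]
        exact (hst N n (by omega) hn k (hkB k N hN2.le) t ht).trans_lt hN1
      obtain ⟨z, hz⟩ := cauchySeq_tendsto_of_complete hc
      exact ⟨z, fun _ => hz⟩
    · exact ⟨0, fun h => absurd h ht⟩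
  choose u hu using hlim
  have hrate : ∀ N : ℕ, 0 < N → ∀ k ∈ Box N, ∀ t, |t| < T → ‖U N t k - u t k‖ ≤ √(e N) := by
    intro N hN k hk t ht
    have h1 : Tendsto (fun N' => ‖U N t k - U N' t k‖) atTop (nhds ‖U N t k - u t k‖) :=
      ((hu t k ht).const_sub _).norm
    refine le_of_tendsto h1 ?_
    filter_upwards [eventually_ge_atTop N] with N' hN'
    exact hst N N' hN hN' k hk t ht
  have hzero : ∀ t, |t| < T → u t 0 = 0 := by
    intro t ht
    refine tendsto_nhds_unique (hu t 0 ht) ?_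
    simp only [fun N => (hUe N).zero t ht]
    exact tendsto_const_nhds
  have hreal : ∀ t, |t| < T → ∀ k, u t (-k) = starRingEnd ℂ (u t k) := by
    intro t ht k
    refine tendsto_nhds_unique (hu t (-k) ht) ?_
    simp only [fun N => (hUe N).real t ht k]
    exact (Complex.continuous_conj.tendsto _).comp (hu t k ht)
  have hG : ∀ t (ht : |t| < T), SumG s (u t) ∧
      Gs s (u t) ≤ (X / (1 - K * X * |t|)) ^ 2 := fun t ht =>
    Gs_le_of_limit (fun k => hu t k ht) (fun N => (hUe N).sum t ht) (fun N => hUb N t ht)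
  have hG2 : ∀ t (ht : |t| < T), SumG s (u t) ∧ Gs s (u t) ≤ B ^ 2 := fun t ht =>
    Gs_le_of_limit (fun k => hu t k ht) (fun N => (hUe N).sum t ht) (fun N => (hUe N).bd t ht)
  have h00 : u 0 = f := by
    funext k
    have h0 : |(0 : ℝ)| < T := by simpa using hT
    refine tendsto_nhds_unique (hu 0 k h0) (tendsto_const_nhds.congr' ?_)
    filter_upwards [eventually_ge_atTop k.natAbs] with N hN
    exact (hU0 N k (hkB k N hN)).symm
  refine ⟨u, h00, fun t ht => (hG t ht).2, fun N => ⟨hzero, hreal, fun t ht => (hG2 t ht).1,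
    fun t ht => (hG2 t ht).2, fun t ht k _ => ?_⟩⟩
  have hs0 : 0 ≤ s := by linarith
  -- uniform convergence of the nonlinearity
  have hunif : TendstoUniformlyOn (fun N t => aHat S (U N t) (U N t) k)
      (fun t => aHat S (u t) (u t) k) atTop {t | |t| < T} := by
    rw [Metric.tendstoUniformlyOn_iff]
    intro ε hε
    have hM : Tendsto (fun M : ℕ => 2 * (C * (M : ℝ) ^ (-s) * B ^ 2)) atTop (nhds 0) := by
      have h1 : Tendsto (fun N : ℕ => (N : ℝ) ^ (-s)) atTop (nhds 0) :=
        (tendsto_rpow_neg_atTop (by linarith)).comp tendsto_natCast_atTop_atTop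
      have := ((h1.const_mul C).mul_const (B ^ 2)).const_mul 2
      simpa using this
    obtain ⟨M, hM1, hM2⟩ := ((hM.eventually (gt_mem_nhds (half_pos hε))).and
          (eventually_gt_atTop 0)).exists
    have hN : Tendsto (fun N : ℕ => (∑ m ∈ Box M, ∑ n ∈ Box M, ‖S (-k) m n‖) *
        (2 * B * √(e N))) atTop (nhds 0) := by
      simpa using (hset.const_mul (2 * B)).const_mul _
    filter_upwards [hN.eventually (gt_mem_nhds (half_pos hε)), eventually_ge_atTop M] with N hN1 hN2 t ht
    have a1 := tail_le hK hμ (by linarith) ((hUe N).zero t ht) ((hUe N).sum t ht) hM2 k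
    have a2 := tail_le hK hμ (by linarith) (hzero t ht) (hG2 t ht).1 hM2 k
    have a3 := Qf_lip S M (U N t) (u t) k hB0 (Real.sqrt_nonneg (e N))
      (coord_le hs0 ((hUe N).zero t ht) ((hUe N).sum t ht) hB0 ((hUe N).bd t ht))
      (coord_le hs0 (hzero t ht) (hG2 t ht).1 hB0 (hG2 t ht).2)
      (fun j hj => hrate N (by omega) j (hmono hN2 j hj) t ht)
    have hcm : 0 ≤ C * (M : ℝ) ^ (-s) := mul_nonneg hK.pos.le (by positivity)
    have b1 := a1.trans (mul_le_mul_of_nonneg_left ((hUe N).bd t ht) hcm)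
    have b2 := a2.trans (mul_le_mul_of_nonneg_left (hG2 t ht).2 hcm)
    rw [dist_comm, dist_eq_norm]
    have e1 : aHat S (U N t) (U N t) k - aHat S (u t) (u t) k =
      (aHat S (U N t) (U N t) k - Qf S M (U N t) (U N t) k) +
      (Qf S M (U N t) (U N t) k - Qf S M (u t) (u t) k) -
      (aHat S (u t) (u t) k - Qf S M (u t) (u t) k) := by ring
    rw [e1]
    have c1 := norm_sub_le ((aHat S (U N t) (U N t) k - Qf S M (U N t) (U N t) k) +
      (Qf S M (U N t) (U N t) k - Qf S M (u t) (u t) k))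
      (aHat S (u t) (u t) k - Qf S M (u t) (u t) k)
    have c2 := norm_add_le (aHat S (U N t) (U N t) k - Qf S M (U N t) (U N t) k)
      (Qf S M (U N t) (U N t) k - Qf S M (u t) (u t) k)
    linarith
  have hunif2 : TendstoUniformlyOn (fun N t => -(Complex.I * (k : ℂ) * aHat S (U N t) (U N t) k))
      (fun t => -(Complex.I * (k : ℂ) * aHat S (u t) (u t) k)) atTop {t | |t| < T} := by
    have hl : UniformContinuous (fun z : ℂ => -(Complex.I * (k : ℂ) * z)) :=
      (LinearMap.mulLeft ℂ (-(Complex.I * (k : ℂ)))).toContinuousLinearMap.uniformContinuous.congr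
        (by intro z; simp)
    exact hl.comp_tendstoUniformlyOn hunif
  refine hasDerivAt_of_tendstoUniformlyOn (isOpen_lt continuous_abs continuous_const) hunif2 ?_
    (fun x hx => hu x k hx) ht
  filter_upwards [eventually_ge_atTop k.natAbs] with N hN x hx
  exact (hUe N).der x hx k (hkB k N hN)

lemma young {p q : ℤ → ℝ} (hp : ∀ n, 0 ≤ p n) (hq : ∀ n, 0 ≤ q n) {P Q : ℝ}
    (hP : HasSum (fun n => p n ^ 2) P) (hQ : HasSum q Q) :
    (∀ k, Summable fun n => p (k - n) * q n) ∧
    (Summable fun k => (∑' n, p (k - n) * q n) ^ 2) ∧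
    ∑' k, (∑' n, p (k - n) * q n) ^ 2 ≤ P * Q ^ 2 := by
  have hQ0 : 0 ≤ Q := hQ.nonneg hq
  have hP0 : 0 ≤ P := hP.nonneg fun n => sq_nonneg _
  have hpb : ∀ n, p n ^ 2 ≤ P := fun n => le_hasSum hP n fun j _ => sq_nonneg _
  have hpb' : ∀ n, p n ≤ √P := fun n => Real.le_sqrt_of_sq_le (hpb n)
  have h1 : ∀ k, Summable fun n => p (k - n) * q n := fun k =>
    Summable.of_nonneg_of_le (fun n => mul_nonneg (hp _) (hq _))
      (fun n => mul_le_mul_of_nonneg_right (hpb' _) (hq n)) (hQ.summable.mul_left (√P))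
  have h2 : ∀ k, Summable fun n => p (k - n) ^ 2 * q n := fun k =>
    Summable.of_nonneg_of_le (fun n => mul_nonneg (sq_nonneg _) (hq _))
      (fun n => mul_le_mul_of_nonneg_right (hpb _) (hq n)) (hQ.summable.mul_left P)
  have h3 : ∀ k, (∑' n, p (k - n) * q n) ^ 2 ≤ (∑' n, p (k - n) ^ 2 * q n) * Q := by
    intro k
    refine le_of_tendsto ((h1 k).hasSum.pow 2) (Eventually.of_forall fun H => ?_)
    refine (Finset.sum_sq_le_sum_mul_sum_of_sq_le_mul H
      (fun n _ => mul_nonneg (sq_nonneg (p (k - n))) (hq n)) (fun n _ => hq n)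
      (fun n _ => le_of_eq (by ring))).trans ?_
    refine mul_le_mul ((h2 k).sum_le_tsum H fun n _ => mul_nonneg (sq_nonneg _) (hq _))
      (sum_le_hasSum H (fun n _ => hq n) hQ) (Finset.sum_nonneg fun n _ => hq n)
      (tsum_nonneg fun n => mul_nonneg (sq_nonneg _) (hq _))
  have h4 : ∀ F : Finset ℤ, ∑ k ∈ F, (∑' n, p (k - n) * q n) ^ 2 ≤ P * Q ^ 2 := by
    intro F
    have h5 : ∑ k ∈ F, ∑' n, p (k - n) ^ 2 * q n ≤ P * Q := by
      rw [← Summable.tsum_finsetSum fun k _ => h2 k, ← (hQ.mul_left P).tsum_eq]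
      refine Summable.tsum_le_tsum (fun n => ?_) (summable_sum fun k _ => h2 k)
        (hQ.mul_left P).summable
      rw [← Finset.sum_mul]
      refine mul_le_mul_of_nonneg_right ?_ (hq n)
      have := sum_le_hasSum (F.map (Equiv.subRight n).toEmbedding) (fun j _ => sq_nonneg (p j)) hP
      simpa using this
    calc ∑ k ∈ F, (∑' n, p (k - n) * q n) ^ 2 ≤ ∑ k ∈ F, (∑' n, p (k - n) ^ 2 * q n) * Q :=
          Finset.sum_le_sum fun k _ => h3 k
      _ = (∑ k ∈ F, ∑' n, p (k - n) ^ 2 * q n) * Q := by rw [Finset.sum_mul]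
      _ ≤ P * Q * Q := mul_le_mul_of_nonneg_right h5 hQ0
      _ = P * Q ^ 2 := by ring
  have h6 : Summable fun k => (∑' n, p (k - n) * q n) ^ 2 :=
    summable_of_sum_le (fun k => sq_nonneg _) h4
  exact ⟨h1, h6, h6.tsum_le_of_sum_le h4⟩

lemma l1_sum {s ν : ℝ} (hs : ν + 1 / 2 < s) {u : ℤ → ℂ} (hu : u 0 = 0) (h : SumG s u) :
    Summable (fun n : ℤ => |(n : ℝ)| ^ ν * ‖u n‖) ∧
    (∑' n : ℤ, |(n : ℝ)| ^ ν * ‖u n‖) ^ 2 ≤ Mconst (s - ν) ^ 2 * Gs s u := by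
  have h1 : ∀ F : Finset ℤ, ∑ n ∈ F, |(n : ℝ)| ^ ν * ‖u n‖ ≤ Mconst (s - ν) * √(Gs s u) :=
    fun F => (l1_le hs u hu F).trans
      (mul_le_mul_of_nonneg_left (Real.sqrt_le_sqrt (sum_le_Gs h F)) (Mconst_nonneg _))
  have h2 : Summable (fun n : ℤ => |(n : ℝ)| ^ ν * ‖u n‖) :=
    summable_of_sum_le (fun n => by positivity) h1
  refine ⟨h2, ?_⟩
  have h3 := pow_le_pow_left₀ (tsum_nonneg fun n => by positivity) (h2.tsum_le_of_sum_le h1) 2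
  rwa [mul_pow, Real.sq_sqrt (Gs_nonneg _ _)] at h3

lemma wt_split {s : ℝ} (hs : 0 ≤ s) (k n : ℤ) :
    |(k : ℝ)| ^ s ≤ 2 ^ s * (|((k - n : ℤ) : ℝ)| ^ s + |(n : ℝ)| ^ s) := by
  have h : |(k : ℝ)| ≤ |((k - n : ℤ) : ℝ)| + |(n : ℝ)| := by
    have := abs_add_le ((k - n : ℤ) : ℝ) (n : ℝ)
    simpa using this
  have h2 : (0:ℝ) < 2 ^ s := by positivity
  have a := Real.rpow_nonneg (abs_nonneg ((k - n : ℤ) : ℝ)) s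
  have b := Real.rpow_nonneg (abs_nonneg (n : ℝ)) s
  rcases le_total |((k - n : ℤ) : ℝ)| |(n : ℝ)| with h1 | h1
  · have := Real.rpow_le_rpow (abs_nonneg (k : ℝ)) (show |(k : ℝ)| ≤ 2 * |(n : ℝ)| by linarith) hs
    rw [Real.mul_rpow (by norm_num) (abs_nonneg _)] at this
    nlinarith
  · have := Real.rpow_le_rpow (abs_nonneg (k : ℝ))
      (show |(k : ℝ)| ≤ 2 * |((k - n : ℤ) : ℝ)| by linarith) hs
    rw [Real.mul_rpow (by norm_num) (abs_nonneg _)] at this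
    nlinarith

lemma bilin {S : ℤ → ℤ → ℤ → ℂ} {μ C s : ℝ} (hK : Ker S μ C) (hμ : 0 ≤ μ) (hs : μ + 3 / 2 < s)
    {z w : ℤ → ℂ} (hz : z 0 = 0) (hw : w 0 = 0) (hz' : SumG s z) (hw' : SumG s w) :
    SumG s (aHat S z w) ∧ Gs s (aHat S z w) ≤
      4 * (C * 2 ^ s) ^ 2 * Mconst (s - μ) ^ 2 * (Gs s z * Gs s w) := by
  have hC := hK.pos
  have hs0 : 0 ≤ s := by linarith
  set pz : ℤ → ℝ := fun n => |(n : ℝ)| ^ s * ‖z n‖ with hpz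
  set pw : ℤ → ℝ := fun n => |(n : ℝ)| ^ s * ‖w n‖ with hpw
  set qz : ℤ → ℝ := fun n => |(n : ℝ)| ^ μ * ‖z n‖ with hqz
  set qw : ℤ → ℝ := fun n => |(n : ℝ)| ^ μ * ‖w n‖ with hqw
  have npz : ∀ n, 0 ≤ pz n := fun n => by positivity
  have npw : ∀ n, 0 ≤ pw n := fun n => by positivity
  have nqz : ∀ n, 0 ≤ qz n := fun n => by positivity
  have nqw : ∀ n, 0 ≤ qw n := fun n => by positivity
  obtain ⟨sz, lz⟩ := l1_sum (s := s) (ν := μ) (by linarith) hz hz'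
  obtain ⟨sw, lw⟩ := l1_sum (s := s) (ν := μ) (by linarith) hw hw'
  have Hpz : HasSum (fun n => pz n ^ 2) (Gs s z) := by
    simp only [hpz, sq_wt]; exact hz'.hasSum
  have Hpw : HasSum (fun n => pw n ^ 2) (Gs s w) := by
    simp only [hpw, sq_wt]; exact hw'.hasSum
  obtain ⟨a1, a2, a3⟩ := young npz nqw Hpz sw.hasSum
  obtain ⟨b1, b2, b3⟩ := young npw nqz Hpw sz.hasSum
  set D := C * 2 ^ s with hD
  have hD0 : 0 ≤ D := by positivity
  have hb1' : ∀ k, HasSum (fun n => qz (k - n) * pw n) (∑' n, pw (k - n) * qz n) := by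
    intro k
    have := (Equiv.subLeft k).hasSum_iff.2 (b1 k).hasSum
    refine this.congr_fun ?_ 
    intro n
    simp [mul_comm]
  have hk : ∀ k : ℤ, |(k : ℝ)| ^ s * ‖aHat S z w k‖ ≤
      D * ((∑' n, pz (k - n) * qw n) + ∑' n, pw (k - n) * qz n) := by
    intro k
    have hh : HasSum (fun n => D * (pz (k - n) * qw n + qz (k - n) * pw n))
        (D * ((∑' n, pz (k - n) * qw n) + ∑' n, pw (k - n) * qz n)) :=
      ((a1 k).hasSum.add (hb1' k)).mul_left D
    have hsm := (summable_aHat hK hμ (by linarith) hz hw hz' hw' k).mul_left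
      (((|(k : ℝ)| ^ s : ℝ)) : ℂ)
    have e : |(k : ℝ)| ^ s * ‖aHat S z w k‖ = ‖∑' n : ℤ, (((|(k : ℝ)| ^ s : ℝ)) : ℂ) *
        (S (-k) (k - n) n * z (k - n) * w n)‖ := by
      rw [tsum_mul_left, norm_mul, Complex.norm_real, Real.norm_of_nonneg (by positivity)]
      rfl
    rw [e]
    refine tsum_of_norm_bounded hh fun n => ?_
    rw [norm_mul, norm_mul, norm_mul, Complex.norm_real, Real.norm_of_nonneg (by positivity)]
    have c1 := hK.b2 (-k) (k - n) n
    have c2 := hK.b3 (-k) (k - n) n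
    have c0 := wt_split hs0 k n
    set σ := ‖S (-k) (k - n) n‖
    have hσ : 0 ≤ σ := norm_nonneg _
    set x := |((k - n : ℤ) : ℝ)|
    have hzz : 0 ≤ ‖z (k - n)‖ * ‖w n‖ := by positivity
    calc |(k : ℝ)| ^ s * (σ * ‖z (k - n)‖ * ‖w n‖)
        ≤ (2 ^ s * (x ^ s + |(n : ℝ)| ^ s)) * (σ * ‖z (k - n)‖ * ‖w n‖) :=
          mul_le_mul_of_nonneg_right c0 (by positivity)
      _ = 2 ^ s * (x ^ s * σ + |(n : ℝ)| ^ s * σ) * (‖z (k - n)‖ * ‖w n‖) := by ring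
      _ ≤ 2 ^ s * (x ^ s * (C * |(n : ℝ)| ^ μ) + |(n : ℝ)| ^ s * (C * x ^ μ)) *
          (‖z (k - n)‖ * ‖w n‖) := by gcongr
      _ = D * (pz (k - n) * qw n + qz (k - n) * pw n) := by
          simp only [hD, hpz, hqw, hqz, hpw, x]; ring
  have hk2 : ∀ k : ℤ, |(k : ℝ)| ^ (2 * s) * ‖aHat S z w k‖ ^ 2 ≤
      2 * D ^ 2 * ((∑' n, pz (k - n) * qw n) ^ 2 + (∑' n, pw (k - n) * qz n) ^ 2) := by
    intro k
    rw [← sq_wt]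
    refine (pow_le_pow_left₀ (by positivity) (hk k) 2).trans ?_
    rw [mul_pow]
    have : ∀ x y : ℝ, D ^ 2 * (x + y) ^ 2 ≤ 2 * D ^ 2 * (x ^ 2 + y ^ 2) := by
      intro x y
      nlinarith [mul_nonneg (sq_nonneg D) (sq_nonneg (x - y))]
    exact this _ _
  have Hs := (a2.hasSum.add b2.hasSum).mul_left (2 * D ^ 2)
  have h1 : SumG s (aHat S z w) :=
    Summable.of_nonneg_of_le (fun k => by positivity) hk2 Hs.summable
  refine ⟨h1, (hasSum_le hk2 h1.hasSum Hs).trans ?_⟩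
  have d1 := a3.trans (mul_le_mul_of_nonneg_left lw (Gs_nonneg s z))
  have d2 := b3.trans (mul_le_mul_of_nonneg_left lz (Gs_nonneg s w))
  calc _ ≤ 2 * D ^ 2 * (Gs s z * (Mconst (s - μ) ^ 2 * Gs s w) +
      Gs s w * (Mconst (s - μ) ^ 2 * Gs s z)) :=
        mul_le_mul_of_nonneg_left (add_le_add d1 d2) (by positivity)
    _ = _ := by ring

lemma SumG.add {s : ℝ} {u v : ℤ → ℂ} (hu : SumG s u) (hv : SumG s v) :
    SumG s (fun k => u k + v k) ∧ Gs s (fun k => u k + v k) ≤ 2 * (Gs s u + Gs s v) := by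
  have H := (hu.hasSum.add hv.hasSum).mul_left 2
  have hk : ∀ k : ℤ, |(k : ℝ)| ^ (2 * s) * ‖u k + v k‖ ^ 2 ≤
      2 * (|(k : ℝ)| ^ (2 * s) * ‖u k‖ ^ 2 + |(k : ℝ)| ^ (2 * s) * ‖v k‖ ^ 2) := by
    intro k
    have h1 := pow_le_pow_left₀ (norm_nonneg _) (norm_add_le (u k) (v k)) 2
    have h2 : (‖u k‖ + ‖v k‖) ^ 2 ≤ 2 * (‖u k‖ ^ 2 + ‖v k‖ ^ 2) := by
      nlinarith [sq_nonneg (‖u k‖ - ‖v k‖)]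
    have := mul_le_mul_of_nonneg_left (h1.trans h2)
      (Real.rpow_nonneg (abs_nonneg (k : ℝ)) (2 * s))
    linarith
  have h1 : SumG s (fun k => u k + v k) :=
    Summable.of_nonneg_of_le (fun k => by positivity) hk H.summable
  exact ⟨h1, hasSum_le hk h1.hasSum H⟩

lemma Gs_neg (s : ℝ) (u : ℤ → ℂ) : Gs s (fun k => - u k) = Gs s u := by simp [Gs]

lemma SumG.sub {s : ℝ} {u v : ℤ → ℂ} (hu : SumG s u) (hv : SumG s v) :
    SumG s (fun k => u k - v k) ∧ Gs s (fun k => u k - v k) ≤ 2 * (Gs s u + Gs s v) := by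
  have hv' : SumG s (fun k => - v k) := by simpa [SumG] using hv
  have := hu.add hv'
  rw [Gs_neg] at this
  simpa [sub_eq_add_neg] using this

lemma aHat_diff {S : ℤ → ℤ → ℤ → ℂ} {μ C s : ℝ} (hK : Ker S μ C) (hμ : 0 ≤ μ) (hs : μ ≤ s)
    {u v : ℤ → ℂ} (hu : u 0 = 0) (hv : v 0 = 0) (hu' : SumG s u) (hv' : SumG s v) (k : ℤ) :
    aHat S u u k - aHat S v v k = aHat S (fun j => u j + v j) (fun j => u j - v j) k := by
  have hsym : aHat S u v k = aHat S v u k := by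
    unfold aHat
    rw [← (Equiv.subLeft k).tsum_eq]
    refine tsum_congr fun n => ?_
    simp only [Equiv.subLeft_apply, sub_sub_cancel]
    rw [hK.sym]
    ring
  have h1 := (summable_aHat hK hμ hs hu hu hu' hu' k).hasSum
  have h2 := (summable_aHat hK hμ hs hu hv hu' hv' k).hasSum
  have h3 := (summable_aHat hK hμ hs hv hu hv' hu' k).hasSum
  have h4 := (summable_aHat hK hμ hs hv hv hv' hv' k).hasSum
  have h5 := ((h1.sub h2).add h3).sub h4
  have e1 : aHat S (fun j => u j + v j) (fun j => u j - v j) k =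
      aHat S u u k - aHat S u v k + aHat S v u k - aHat S v v k := by
    unfold aHat
    rw [← h5.tsum_eq]
    refine tsum_congr fun n => ?_
    ring
  rw [e1, hsym]
  ring

lemma wt_shift {s : ℝ} (hs : 1 < s) (k : ℤ) (x : ℂ) :
    |(k : ℝ)| ^ (2 * (s - 1)) * ‖-(Complex.I * (k : ℂ) * x)‖ ^ 2 =
      |(k : ℝ)| ^ (2 * s) * ‖x‖ ^ 2 := by
  rw [norm_neg, norm_mul, norm_mul, Complex.norm_I, one_mul, Complex.norm_intCast, mul_pow,
    ← mul_assoc, ← Real.rpow_natCast, ← Real.rpow_add_of_nonneg (abs_nonneg _) (by linarith)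
      (by norm_num)]
  congr 2
  push_cast
  ring

lemma InHs_dfld {S : ℤ → ℤ → ℤ → ℂ} {μ C s : ℝ} (hK : Ker S μ C) (hμ : 0 ≤ μ)
    (hs : μ + 3 / 2 < s) {u : ℤ → ℂ} (hu : InHs s u) :
    InHs (s - 1) fun k => -(Complex.I * (k : ℂ) * aHat S u u k) := by
  obtain ⟨h0, hr, hS⟩ := hu
  refine ⟨by simp, fun k => ?_, ?_⟩
  · beta_reduce
    rw [conj_aHat hK u hr]
    simp
  · simp only [wt_shift (show 1 < s by linarith)]
    exact (bilin hK hμ hs h0 h0 hS hS).1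

lemma hnorm_dfld {S : ℤ → ℤ → ℤ → ℂ} {μ C s : ℝ} (hK : Ker S μ C) (hμ : 0 ≤ μ)
    (hs : μ + 3 / 2 < s) {u v : ℤ → ℂ} (hu : InHs s u) (hv : InHs s v) :
    hnorm (s - 1) (fun k => -(Complex.I * (k : ℂ) * aHat S u u k) -
      -(Complex.I * (k : ℂ) * aHat S v v k)) ≤
    √(4 * (C * 2 ^ s) ^ 2 * Mconst (s - μ) ^ 2 *
      ((4 * Gs s (fun k => u k - v k) + 8 * Gs s v) * Gs s (fun k => u k - v k))) := by
  obtain ⟨hu0, hur, huS⟩ := hu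
  obtain ⟨hv0, hvr, hvS⟩ := hv
  have e : ∀ k : ℤ, (-(Complex.I * (k : ℂ) * aHat S u u k) -
      -(Complex.I * (k : ℂ) * aHat S v v k)) =
      -(Complex.I * (k : ℂ) * aHat S (fun j => u j + v j) (fun j => u j - v j) k) := by
    intro k
    rw [← aHat_diff hK hμ (by linarith) hu0 hv0 huS hvS]
    ring
  rw [hnorm_eq]
  refine Real.sqrt_le_sqrt ?_
  simp only [e]
  unfold Gs
  simp only [wt_shift (show 1 < s by linarith)]
  have hd := (SumG.sub huS hvS).1
  have ha := (SumG.add huS hvS)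
  refine (bilin hK hμ hs (by simp [hu0, hv0]) (by simp [hu0, hv0]) ha.1 hd).2.trans ?_
  refine mul_le_mul_of_nonneg_left (mul_le_mul_of_nonneg_right ?_ (Gs_nonneg _ _)) (by positivity)
  have h2v : SumG s (fun k => v k + v k) ∧ _ := SumG.add hvS hvS
  have h3 := SumG.add hd h2v.1
  have e3 : (fun k => (u k - v k) + (v k + v k)) = fun j => u j + v j := by
    funext k; ring
  rw [e3] at h3
  have h4 := h3.2
  have h5 := h2v.2
  have h6 := Gs_nonneg s (fun k => u k - v k)
  change _ ≤ 4 * Gs s (fun k => u k - v k) + 8 * Gs s v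
  linarith

lemma strong_cont {s : ℝ} {u : ℝ → ℤ → ℂ} {t₀ : ℝ} {b : ℝ → ℝ} (h0 : SumG s (u t₀))
    (h1 : ∀ᶠ t in nhds t₀, SumG s (u t) ∧ Gs s (u t) ≤ b t)
    (hb : Tendsto b (nhds t₀) (nhds (Gs s (u t₀))))
    (hc : ∀ k, ContinuousAt (fun t => u t k) t₀) :
    Tendsto (fun t => hnorm s fun k => u t k - u t₀ k) (nhds t₀) (nhds 0) := by
  have key : Tendsto (fun t => Gs s fun k => u t k - u t₀ k) (nhds t₀) (nhds 0) := by
    rw [Metric.tendsto_nhds]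
    intro ε hε
    have hF : Tendsto (fun F : Finset ℤ => 4 * (Gs s (u t₀) -
        ∑ k ∈ F, |(k : ℝ)| ^ (2 * s) * ‖u t₀ k‖ ^ 2)) atTop (nhds 0) := by
      have : HasSum (fun k : ℤ => |(k : ℝ)| ^ (2 * s) * ‖u t₀ k‖ ^ 2) (Gs s (u t₀)) := h0.hasSum
      have h := (Tendsto.const_sub (Gs s (u t₀)) this).const_mul 4
      simpa using h
    obtain ⟨F, hF⟩ := (hF.eventually (gt_mem_nhds hε)).exists
    have hR : Tendsto (fun t => (∑ k ∈ F, |(k : ℝ)| ^ (2 * s) * ‖u t k - u t₀ k‖ ^ 2) +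
        2 * (b t - ∑ k ∈ F, |(k : ℝ)| ^ (2 * s) * ‖u t k‖ ^ 2) +
        2 * (Gs s (u t₀) - ∑ k ∈ F, |(k : ℝ)| ^ (2 * s) * ‖u t₀ k‖ ^ 2)) (nhds t₀)
        (nhds (4 * (Gs s (u t₀) - ∑ k ∈ F, |(k : ℝ)| ^ (2 * s) * ‖u t₀ k‖ ^ 2))) := by
      have c1 : Tendsto (fun t => ∑ k ∈ F, |(k : ℝ)| ^ (2 * s) * ‖u t k - u t₀ k‖ ^ 2) (nhds t₀)
          (nhds (∑ k ∈ F, |(k : ℝ)| ^ (2 * s) * ‖u t₀ k - u t₀ k‖ ^ 2)) :=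
        tendsto_finsetSum _ fun k _ => (((hc k).tendsto.sub_const _).norm.pow 2).const_mul _
      have c2 : Tendsto (fun t => ∑ k ∈ F, |(k : ℝ)| ^ (2 * s) * ‖u t k‖ ^ 2) (nhds t₀)
          (nhds (∑ k ∈ F, |(k : ℝ)| ^ (2 * s) * ‖u t₀ k‖ ^ 2)) :=
        tendsto_finsetSum _ fun k _ => ((hc k).tendsto.norm.pow 2).const_mul _
      have c3 := (c1.add ((hb.sub c2).const_mul 2)).add_const
        (2 * (Gs s (u t₀) - ∑ k ∈ F, |(k : ℝ)| ^ (2 * s) * ‖u t₀ k‖ ^ 2))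
      refine c3.trans_eq ?_ 
      congr 1
      simp
      ring
    filter_upwards [h1, hR.eventually (gt_mem_nhds hF)] with t ht hlt
    rw [dist_zero_right, Real.norm_of_nonneg (Gs_nonneg _ _)]
    refine lt_of_le_of_lt ?_ hlt
    have hd := (SumG.sub ht.1 h0).1
    have hs3 : HasSum (fun k : ℤ => 2 * (|(k : ℝ)| ^ (2 * s) * ‖u t k‖ ^ 2 +
        |(k : ℝ)| ^ (2 * s) * ‖u t₀ k‖ ^ 2) - |(k : ℝ)| ^ (2 * s) * ‖u t k - u t₀ k‖ ^ 2)
        (2 * (Gs s (u t) + Gs s (u t₀)) - Gs s (fun k => u t k - u t₀ k)) :=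
      ((ht.1.hasSum.add h0.hasSum).mul_left 2).sub hd.hasSum
    have h4 := sum_le_hasSum F (fun k _ => ?_) hs3
    · simp only [Finset.sum_sub_distrib, ← Finset.mul_sum, Finset.sum_add_distrib] at h4
      linarith [ht.2]
    · have h1 := pow_le_pow_left₀ (norm_nonneg _) (norm_sub_le (u t k) (u t₀ k)) 2
      have h2 : (‖u t k‖ + ‖u t₀ k‖) ^ 2 ≤ 2 * (‖u t k‖ ^ 2 + ‖u t₀ k‖ ^ 2) := by
        nlinarith [sq_nonneg (‖u t k‖ - ‖u t₀ k‖)]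
      have := mul_le_mul_of_nonneg_left (h1.trans h2)
        (Real.rpow_nonneg (abs_nonneg (k : ℝ)) (2 * s))
      linarith
  simp only [hnorm_eq]
  simpa using key.sqrt

lemma Evo.mono {S : ℤ → ℤ → ℤ → ℂ} {s : ℝ} {N : ℕ} {B B' T T' : ℝ} {u : ℝ → ℤ → ℂ}
    (h : Evo S s N B T u) (hB : 0 ≤ B) (hBB : B ≤ B') (hT : T' ≤ T) : Evo S s N B' T' u :=
  ⟨fun t ht => h.zero t (ht.trans_le hT), fun t ht => h.real t (ht.trans_le hT),
    fun t ht => h.sum t (ht.trans_le hT),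
    fun t ht => (h.bd t (ht.trans_le hT)).trans (pow_le_pow_left₀ hB hBB 2),
    fun t ht => h.der t (ht.trans_le hT)⟩

lemma Evo.shift {S : ℤ → ℤ → ℤ → ℂ} {s : ℝ} {N : ℕ} {B T T' t₀ : ℝ} {u : ℝ → ℤ → ℂ}
    (h : Evo S s N B T u) (hT : |t₀| + T' ≤ T) : Evo S s N B T' (fun τ => u (t₀ + τ)) := by
  have hb : ∀ t, |t| < T' → |t₀ + t| < T := fun t ht =>
    (abs_add_le _ _).trans_lt (by linarith)
  refine ⟨fun t ht => h.zero _ (hb t ht), fun t ht => h.real _ (hb t ht),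
    fun t ht => h.sum _ (hb t ht), fun t ht => h.bd _ (hb t ht), fun t ht k hk => ?_⟩
  have := h.der _ (hb t ht) k hk
  exact HasDerivAt.comp_const_add t₀ t this

lemma Evo.inHs {S : ℤ → ℤ → ℤ → ℂ} {s : ℝ} {N : ℕ} {B T : ℝ} {u : ℝ → ℤ → ℂ}
    (h : Evo S s N B T u) {t : ℝ} (ht : |t| < T) : InHs s (u t) :=
  ⟨h.zero t ht, h.real t ht, h.sum t ht⟩

lemma evo_cont {S : ℤ → ℤ → ℤ → ℂ} {μ C s Cs : ℝ} (hK : Ker S μ C) (hμ : 0 ≤ μ)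
    (hs : μ + 3 / 2 < s) (hCs0 : 0 ≤ Cs)
    (hCs : ∀ k m n : ℝ, k + m + n = 0 →
      |k * |k| ^ (2 * s) + m * |m| ^ (2 * s) + n * |n| ^ (2 * s)| ≤
        Cs * (|k| ^ s * |m| ^ s * |n| + |n| ^ s * |k| ^ s * |m| + |m| ^ s * |n| ^ s * |k|))
    {B T : ℝ} (hB : 0 ≤ B) {u : ℝ → ℤ → ℂ} (hu : ∀ N, Evo S s N B T u) {t₀ : ℝ} (ht₀ : |t₀| < T) :
    Tendsto (fun t => hnorm s fun k => u t k - u t₀ k) (nhds t₀) (nhds 0) := by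
  set K := C * Cs * Mconst (s - (1 + μ)) with hKs
  have hK0 : 0 ≤ K := mul_nonneg (mul_nonneg hK.pos.le hCs0) (Mconst_nonneg _)
  set X := √(Gs s (u t₀)) with hX
  have hX0 : 0 ≤ X := Real.sqrt_nonneg _
  have hKX : 0 ≤ K * X := mul_nonneg hK0 hX0
  set T' := min (T - |t₀|) (1 / (2 * (K * X + 1))) with hT'
  have hT'0 : 0 < T' := lt_min (by linarith) (by positivity)
  have hT'1 : |t₀| + T' ≤ T := by linarith [min_le_left (T - |t₀|) (1 / (2 * (K * X + 1)))]
  have hKT : K * X * T' < 1 := by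
    have h1 : T' ≤ 1 / (2 * (K * X + 1)) := min_le_right _ _
    have h2 := mul_le_mul_of_nonneg_left h1 hKX
    have h3 : K * X * (1 / (2 * (K * X + 1))) < 1 := by
      rw [mul_one_div, div_lt_one (by positivity)]
      linarith
    linarith
  obtain ⟨w, hw0, hwb, hwe⟩ := local_exist hK hμ hs hCs0 hCs (u t₀) ((hu 0).inHs ht₀) hT'0 hKs hKT
  have hB' : 0 ≤ X / (1 - K * X * T') := div_nonneg hX0 (by linarith)
  have heq : ∀ τ, |τ| < T' → u (t₀ + τ) = w τ := by
    intro τ hτ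
    refine evo_unique (u := fun τ => u (t₀ + τ)) hK hμ hs (hB.trans (le_max_left _ (X / (1 - K * X * T'))))
      (fun N => ((hu N).shift hT'1).mono hB (le_max_left _ _) le_rfl)
      (fun N => (hwe N).mono hB' (le_max_right _ _) le_rfl) ?_ τ hτ
    simp [hw0]
  have hnear : ∀ᶠ t in nhds t₀, |t - t₀| < T' := by
    have := Metric.ball_mem_nhds t₀ hT'0
    filter_upwards [this] with t ht
    simpa [Real.dist_eq] using ht
  refine strong_cont (b := fun t => (X / (1 - K * X * |t - t₀|)) ^ 2) ((hu 0).sum t₀ ht₀) ?_ ?_ ?_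
  · filter_upwards [hnear] with t ht
    have h := heq _ ht
    rw [add_sub_cancel] at h
    rw [h]
    exact ⟨(hwe 0).sum _ ht, hwb _ ht⟩
  · have : ContinuousAt (fun t => (X / (1 - K * X * |t - t₀|)) ^ 2) t₀ := by
      refine ContinuousAt.pow (ContinuousAt.div continuousAt_const (by fun_prop) (by simp)) 2
    have h := this.tendsto
    simp only [sub_self, abs_zero, mul_zero, sub_zero, div_one] at h
    rwa [hX, Real.sq_sqrt (Gs_nonneg _ _)] at h
  · intro k
    have hk : k ∈ Box k.natAbs := by rw [mem_Box, Int.abs_eq_natAbs]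
    exact ((hu k.natAbs).der t₀ ht₀ k hk).continuousAt

lemma sol_evo {S : ℤ → ℤ → ℤ → ℂ} {s τ T : ℝ} (hT : T < τ) {v : ℝ → ℤ → ℂ}
    (hv : IsSolution S s (Set.Ioo (-τ) τ) v) : ∃ B, 0 ≤ B ∧ ∀ N, Evo S s N B T v := by
  obtain ⟨hv1, hv2, hv3, -, -⟩ := hv
  have hsub : Set.Icc (-T) T ⊆ Set.Ioo (-τ) τ := fun x hx => ⟨by linarith [hx.1], by linarith [hx.2]⟩
  have hb : ∃ b, ∀ t ∈ Set.Icc (-T) T, Gs s (v t) ≤ b := by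
    refine isCompact_Icc.induction_on (p := fun A => ∃ b, ∀ t ∈ A, Gs s (v t) ≤ b) ⟨0, by simp⟩
      (fun A A' h ⟨b, hb⟩ => ⟨b, fun t ht => hb t (h ht)⟩)
      (fun A A' ⟨b, hb⟩ ⟨b', hb'⟩ => ⟨max b b', fun t ht => ?_⟩) fun x hx => ?_
    · rcases ht with ht | ht
      · exact (hb t ht).trans (le_max_left _ _)
      · exact (hb' t ht).trans (le_max_right _ _)
    · have h1 := (hv2 x (hsub hx)).eventually (gt_mem_nhds one_pos)
      have h2 : ∀ᶠ t in nhdsWithin x (Set.Icc (-T) T), hnorm s (fun k => v t k - v x k) < 1 :=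
        h1.filter_mono (nhdsWithin_mono x hsub)
      refine ⟨_, inter_mem h2 self_mem_nhdsWithin, 2 * (1 + Gs s (v x)), fun t ht => ?_⟩
      have hx' := (hv1 x (hsub hx)).2.2
      have ht' := (hv1 t (hsub ht.2)).2.2
      have h3 := (SumG.sub ht' hx').1
      have h4 := (SumG.add h3 hx').2
      have h5 : hnorm s (fun k => v t k - v x k) < 1 := ht.1
      rw [hnorm_eq, Real.sqrt_lt' one_pos] at h5
      simp only [sub_add_cancel] at h4
      refine h4.trans ?_
      linarith
  obtain ⟨b, hb⟩ := hb
  refine ⟨√(max b 0), Real.sqrt_nonneg _, fun N => ?_⟩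
  have hm : ∀ t, |t| < T → t ∈ Set.Ioo (-τ) τ := fun t ht =>
    abs_lt.1 (ht.trans hT)
  refine ⟨fun t ht => (hv1 t (hm t ht)).1, fun t ht => (hv1 t (hm t ht)).2.1,
    fun t ht => (hv1 t (hm t ht)).2.2, fun t ht => ?_, fun t ht k _ => hv3 t (hm t ht) k⟩
  rw [Real.sq_sqrt (le_max_right _ _)]
  exact (hb t ⟨(abs_lt.1 ht).1.le, (abs_lt.1 ht).2.le⟩).trans (le_max_left _ _)

lemma glue {S : ℤ → ℤ → ℤ → ℂ} {μ C s Cs : ℝ} (hK : Ker S μ C) (hμ : 0 ≤ μ)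
    (hs : μ + 3 / 2 < s) (hCs0 : 0 ≤ Cs)
    (hCs : ∀ k m n : ℝ, k + m + n = 0 →
      |k * |k| ^ (2 * s) + m * |m| ^ (2 * s) + n * |n| ^ (2 * s)| ≤
        Cs * (|k| ^ s * |m| ^ s * |n| + |n| ^ s * |k| ^ s * |m| + |m| ^ s * |n| ^ s * |k|))
    (f : ℤ → ℂ) (hf : InHs s f) {K : ℝ}
    (hKs : K = C * Cs * Mconst (s - (1 + μ))) (hKX : 0 < K * √(Gs s f)) :
    ∃ u : ℝ → ℤ → ℂ, u 0 = f ∧ ∀ T, T < 1 / (K * √(Gs s f)) →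
      ∃ B, 0 ≤ B ∧ ∀ N, Evo S s N B T u := by
  set X := √(Gs s f) with hX
  have hX0 : 0 ≤ X := Real.sqrt_nonneg _
  set τ := 1 / (K * X) with hτ
  have hτ0 : 0 < τ := by positivity
  have hval : ∀ T, T < τ → K * X * T < 1 := by
    intro T h
    rw [hτ, lt_div_iff₀ hKX] at h
    linarith
  have hex : ∀ T : ℝ, ∃ u : ℝ → ℤ → ℂ, 0 < T → T < τ → u 0 = f ∧
      ∃ B, 0 ≤ B ∧ ∀ N, Evo S s N B T u := by
    intro T
    by_cases h : 0 < T ∧ T < τ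
    · obtain ⟨u, h1, -, h3⟩ := local_exist hK hμ hs hCs0 hCs f hf h.1 hKs (hval T h.2)
      exact ⟨u, fun _ _ => ⟨h1, _, div_nonneg hX0 (by linarith [hval T h.2]), h3⟩⟩
    · exact ⟨fun _ => f, fun h1 h2 => absurd ⟨h1, h2⟩ h⟩
  choose U hU using hex
  have hcons : ∀ T T' t, T < τ → T' < τ → |t| < T → |t| < T' → U T t = U T' t := by
    intro T T' t hT hT' h1 h2
    have p1 : 0 < T := (abs_nonneg t).trans_lt h1
    have p2 : 0 < T' := (abs_nonneg t).trans_lt h2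
    obtain ⟨a0, B, hB, hE⟩ := hU T p1 hT
    obtain ⟨a0', B', hB', hE'⟩ := hU T' p2 hT'
    exact evo_unique hK hμ hs (hB.trans (le_max_left B B'))
      (fun N => (hE N).mono hB (le_max_left _ _) (min_le_left T T'))
      (fun N => (hE' N).mono hB' (le_max_right _ _) (min_le_right T T'))
      (a0.trans a0'.symm) t (lt_min h1 h2)
  set u : ℝ → ℤ → ℂ := fun t => U ((|t| + τ) / 2) t with hu
  have huU : ∀ T t, T < τ → |t| < T → u t = U T t := fun T t hT ht =>
    hcons _ _ _ (by linarith) hT (by linarith) ht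
  refine ⟨u, ?_, fun T hT => ?_⟩
  · exact (hU _ (by simp; linarith) (by simp; linarith)).1
  · rcases le_or_gt T 0 with h0 | h0
    · have : ∀ t, ¬ |t| < T := fun t ht => by linarith [abs_nonneg t]
      exact ⟨0, le_rfl, fun N => ⟨fun t ht => absurd ht (this t), fun t ht => absurd ht (this t),
        fun t ht => absurd ht (this t), fun t ht => absurd ht (this t),
        fun t ht => absurd ht (this t)⟩⟩
    obtain ⟨-, B, hB, hE⟩ := hU T h0 hT
    refine ⟨B, hB, fun N => ⟨fun t ht => ?_, fun t ht => ?_, fun t ht => ?_, fun t ht => ?_,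
      fun t ht k hk => ?_⟩⟩
    · rw [huU T t hT ht]; exact (hE N).zero t ht
    · rw [huU T t hT ht]; exact (hE N).real t ht
    · rw [huU T t hT ht]; exact (hE N).sum t ht
    · rw [huU T t hT ht]; exact (hE N).bd t ht
    · rw [huU T t hT ht]
      refine ((hE N).der t ht k hk).congr_of_eventuallyEq ?_
      filter_upwards [(isOpen_lt continuous_abs continuous_const).mem_nhds ht] with x hx
      rw [huU T x hT hx]

lemma main_aux {S : ℤ → ℤ → ℤ → ℂ} {μ C s Cs : ℝ} (hK : Ker S μ C) (hμ : 0 ≤ μ)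
    (hs : μ + 3 / 2 < s) (hCs0 : 0 ≤ Cs)
    (hCs : ∀ k m n : ℝ, k + m + n = 0 →
      |k * |k| ^ (2 * s) + m * |m| ^ (2 * s) + n * |n| ^ (2 * s)| ≤
        Cs * (|k| ^ s * |m| ^ s * |n| + |n| ^ s * |k| ^ s * |m| + |m| ^ s * |n| ^ s * |k|))
    {τ : ℝ} {u : ℝ → ℤ → ℂ} (hu : ∀ T, T < τ → ∃ B, 0 ≤ B ∧ ∀ N, Evo S s N B T u) :
    IsSolution S s (Set.Ioo (-τ) τ) u := by
  have hin : ∀ t ∈ Set.Ioo (-τ) τ, InHs s (u t) := by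
    intro t ht
    have ht' := abs_lt.2 ht
    obtain ⟨B, hB, hE⟩ := hu ((|t| + τ) / 2) (by linarith)
    exact (hE 0).inHs (by linarith)
  have hcont : ∀ t ∈ Set.Ioo (-τ) τ,
      Tendsto (fun x => hnorm s fun k => u x k - u t k) (nhds t) (nhds 0) := by
    intro t ht
    have ht' := abs_lt.2 ht
    obtain ⟨B, hB, hE⟩ := hu ((|t| + τ) / 2) (by linarith)
    exact evo_cont hK hμ hs hCs0 hCs hB hE (by linarith)
  refine ⟨hin, fun t ht => (hcont t ht).mono_left nhdsWithin_le_nhds, fun t ht k => ?_,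
    fun t ht => InHs_dfld hK hμ hs (hin t ht), fun t ht => ?_⟩
  · have ht' := abs_lt.2 ht
    obtain ⟨B, hB, hE⟩ := hu ((|t| + τ) / 2) (by linarith)
    have hk : k ∈ Box k.natAbs := by rw [mem_Box, Int.abs_eq_natAbs]
    exact (hE k.natAbs).der t (by linarith) k hk
  · have h1 := hcont t ht
    have hG : Tendsto (fun x => Gs s fun k => u x k - u t k) (nhds t) (nhds 0) := by
      have := h1.pow 2
      simp only [hnorm_eq, Real.sq_sqrt (Gs_nonneg _ _)] at this
      simpa using this
    have hR : Tendsto (fun x => √(4 * (C * 2 ^ s) ^ 2 * Mconst (s - μ) ^ 2 *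
      ((4 * Gs s (fun k => u x k - u t k) + 8 * Gs s (u t)) * Gs s (fun k => u x k - u t k))))
      (nhds t) (nhds 0) := by
      have := ((((hG.const_mul 4).add_const (8 * Gs s (u t))).mul hG).const_mul
        (4 * (C * 2 ^ s) ^ 2 * Mconst (s - μ) ^ 2)).sqrt
      simpa using this
    refine squeeze_zero' (Eventually.of_forall fun x => ?_) ?_ (hR.mono_left nhdsWithin_le_nhds)
    · rw [hnorm_eq]; exact Real.sqrt_nonneg _
    · filter_upwards [self_mem_nhdsWithin] with x hx
      exact hnorm_dfld hK hμ hs (hin x hx) (hin t ht)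

/-- Short-time existence and uniqueness for scale-invariant Hamiltonian waves
(kernels of nonnegative degree `μ ≥ 0`). -/
theorem short_time_existence
    (μ : ℝ) (hμ : 0 ≤ μ) (S : ℤ → ℤ → ℤ → ℂ)
    (hS0 : ∀ k m n : ℤ, k * m * n = 0 → S k m n = 0)
    (hSreal : ∀ k m n : ℤ, S k m n = starRingEnd ℂ (S (-k) (-m) (-n)))
    (hSsym : ∀ k m n : ℤ, S k m n = S k n m)
    (hScyc : ∀ k m n : ℤ, S k m n = S m n k)
    (hShom : ∀ η : ℕ, 0 < η → ∀ k m n : ℤ,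
      S (η * k) (η * m) (η * n) = ((((η : ℝ) ^ μ : ℝ)) : ℂ) * S k m n)
    (C : ℝ) (hC : 0 < C)
    (hSbound : ∀ k m n : ℤ, ‖S k m n‖ ≤
      C * min (|(k : ℝ)| ^ μ) (min (|(m : ℝ)| ^ μ) (|(n : ℝ)| ^ μ)))
    (s : ℝ) (hs : μ + 3 / 2 < s)
    (Cs : ℝ)
    (hCs : ∀ k m n : ℝ, k + m + n = 0 →
      |k * |k| ^ (2 * s) + m * |m| ^ (2 * s) + n * |n| ^ (2 * s)| ≤
        Cs * (|k| ^ s * |m| ^ s * |n| + |n| ^ s * |k| ^ s * |m| + |m| ^ s * |n| ^ s * |k|))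
    (Ks : ℝ) (hKs : Ks = C * Cs * Mconst (s - μ - 1))
    (f : ℤ → ℂ) (hf : InHs s f) :
    ∃ u : ℝ → ℤ → ℂ,
      (IsSolution S s (Set.Ioo (-(1 / (Ks * hnorm s f))) (1 / (Ks * hnorm s f))) u ∧
        u 0 = f) ∧
      ∀ v : ℝ → ℤ → ℂ,
        IsSolution S s (Set.Ioo (-(1 / (Ks * hnorm s f))) (1 / (Ks * hnorm s f))) v →
        v 0 = f →
        ∀ t ∈ Set.Ioo (-(1 / (Ks * hnorm s f))) (1 / (Ks * hnorm s f)), v t = u t := by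
  have hK : Ker S μ C := ⟨hSreal, hSsym, hScyc, hC, hSbound⟩
  have hCs0 : 0 ≤ Cs := by
    have h := (abs_nonneg _).trans (hCs 1 1 (-2) (by norm_num))
    refine nonneg_of_mul_nonneg_left h ?_
    positivity
  have hKs' : Ks = C * Cs * Mconst (s - (1 + μ)) := by
    rw [hKs]; congr 2; ring
  have hK0 : 0 ≤ Ks := by
    rw [hKs]; exact mul_nonneg (mul_nonneg hC.le hCs0) (Mconst_nonneg _)
  rw [hnorm_eq]
  rcases (mul_nonneg hK0 (Real.sqrt_nonneg (Gs s f))).eq_or_lt with h0 | h0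
  · rw [← h0]
    have he : ∀ t : ℝ, t ∉ Set.Ioo (-(1 / (0 : ℝ))) (1 / 0) := by
      intro t ht
      simp at ht
    exact ⟨fun _ => f, ⟨⟨fun t ht => absurd ht (he t), fun t ht => absurd ht (he t),
      fun t ht => absurd ht (he t), fun t ht => absurd ht (he t), fun t ht => absurd ht (he t)⟩,
      rfl⟩, fun v _ _ t ht => absurd ht (he t)⟩
  · obtain ⟨u, hu0, hu⟩ := glue hK hμ hs hCs0 hCs f hf hKs' h0
    refine ⟨u, ⟨main_aux hK hμ hs hCs0 hCs hu, hu0⟩, fun v hv hv0 t ht => ?_⟩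
    have ht' := abs_lt.2 ht
    set τ := 1 / (Ks * √(Gs s f)) with hτ
    have h1 : (|t| + τ) / 2 < τ := by linarith
    obtain ⟨B, hB, hE⟩ := hu _ h1
    obtain ⟨B', hB', hE'⟩ := sol_evo h1 hv
    exact evo_unique hK hμ hs (hB.trans (le_max_left B B'))
      (fun N => (hE' N).mono hB' (le_max_right _ _) le_rfl)
      (fun N => (hE N).mono hB (le_max_left _ _) le_rfl)
      (hv0.trans hu0.symm) t (by linarith)
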